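/- Let S^{k,n-k} = (S^k × S^{n-k})/Z₂ be the quotient of a product of spheres by the simultaneous antipodal involution (x, y) ↦ (-x, -y), with 0 ≤ k ≤ n - k. Then the sum of the Z/2-Betti numbers of S^{k,n-k} equals 2(k + 1) when k < n - k, and equals 2(k+1) for k = n-k as well; in particular SB(S^{0,n}, Z/2) = 2. -/

import Mathlib

open CategoryTheory AlgebraicTopology
/-- The singular chain complex of a topological space with `ℤ/2` coefficients. -/
noncomputable def singularChainComplex (X : TopCat) : ChainComplex (ModuleCat (ZMod 2)) ℕ :=
  (AlgebraicTopology.alternatingFaceMapComplex (ModuleCat (ZMod 2))).obj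
    (((SimplicialObject.whiskering _ _).obj (ModuleCat.free (ZMod 2))).obj (TopCat.toSSet.obj X))

/-- The `i`-th singular homology of `X` with `ℤ/2` coefficients. -/
noncomputable def singularHomology (X : TopCat) (i : ℕ) : ModuleCat (ZMod 2) :=
  (singularChainComplex X).homology i

/-- The `i`-th `ℤ/2`-Betti number of `X`. -/
noncomputable def betti (X : TopCat) (i : ℕ) : ℕ :=
  Module.finrank (ZMod 2) (singularHomology X i)

/-- The space `S^{k,n-k} = (S^k × S^{n-k})/ℤ₂`, the quotient of a product of round spheres
by the simultaneous antipodal involution `(x, y) ↦ (-x, -y)`. -/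
noncomputable def Skl (k l : ℕ) : TopCat :=
  TopCat.of (Quotient (α := Metric.sphere (0 : EuclideanSpace ℝ (Fin (k + 1))) 1 ×
      Metric.sphere (0 : EuclideanSpace ℝ (Fin (l + 1))) 1)
    { r := fun p q =>
        ((p.1 : EuclideanSpace ℝ (Fin (k + 1))) = q.1 ∧
          (p.2 : EuclideanSpace ℝ (Fin (l + 1))) = q.2) ∨
        ((p.1 : EuclideanSpace ℝ (Fin (k + 1))) = -(q.1 : EuclideanSpace ℝ (Fin (k + 1))) ∧
          (p.2 : EuclideanSpace ℝ (Fin (l + 1))) = -(q.2 : EuclideanSpace ℝ (Fin (l + 1))))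
      iseqv := by
        constructor
        · intro p; left; exact ⟨rfl, rfl⟩
        · rintro p q (⟨h₁, h₂⟩ | ⟨h₁, h₂⟩)
          · left; exact ⟨h₁.symm, h₂.symm⟩
          · right; constructor <;> [rw [h₁]; rw [h₂]] <;> simp
        · rintro p q r (⟨h₁, h₂⟩ | ⟨h₁, h₂⟩) (⟨g₁, g₂⟩ | ⟨g₁, g₂⟩)
          · left; exact ⟨h₁.trans g₁, h₂.trans g₂⟩
          · right; exact ⟨by rw [h₁, g₁], by rw [h₂, g₂]⟩
          · right; exact ⟨by rw [h₁, g₁], by rw [h₂, g₂]⟩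
          · left; exact ⟨by rw [h₁, g₁]; simp, by rw [h₂, g₂]; simp⟩ })



namespace SklProof
open Simplicial Opposite

/-! ## Chains on simplicial sets -/

/-- The mod 2 chain complex functor on simplicial sets. -/
noncomputable def CsF : SSet.{0} ⥤ ChainComplex (ModuleCat.{0} (ZMod 2)) ℕ :=
  (SimplicialObject.whiskering _ _).obj (ModuleCat.free (ZMod 2)) ⋙
    AlgebraicTopology.alternatingFaceMapComplex (ModuleCat (ZMod 2))

/-- Mod 2 chains of a simplicial set. -/
noncomputable abbrev Cs (X : SSet.{0}) : ChainComplex (ModuleCat.{0} (ZMod 2)) ℕ := CsF.obj X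

lemma singularChainComplex_eq (X : TopCat.{0}) :
    singularChainComplex X = Cs (TopCat.toSSet.obj X) := rfl

/-- chains are finitely supported functions -/
noncomputable def toCh (X : SSet.{0}) (n : ℕ) : (X _⦋n⦌ →₀ ZMod 2) ≃ₗ[ZMod 2] (Cs X).X n :=
  LinearEquiv.refl (ZMod 2) (X _⦋n⦌ →₀ ZMod 2)

/-- The basis chain of a simplex. -/
noncomputable def bas {X : SSet.{0}} {n : ℕ} (x : X _⦋n⦌) : (Cs X).X n :=
  toCh X n (Finsupp.single x 1)

lemma map_bas {X Y : SSet.{0}} (f : X ⟶ Y) {n : ℕ} (x : X _⦋n⦌) :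
    (CsF.map f).f n (bas x) = bas (f.app _ x) := by
  exact Finsupp.mapDomain_single

lemma map_toCh {X Y : SSet.{0}} (f : X ⟶ Y) {n : ℕ} (c : X _⦋n⦌ →₀ ZMod 2) :
    (CsF.map f).f n (toCh X n c) = toCh Y n (c.mapDomain (f.app (op ⦋n⦌))) := by
  rfl

lemma d_bas {X : SSet.{0}} {n : ℕ} (x : X _⦋n+1⦌) :
    (Cs X).d (n+1) n (bas x) = ∑ i : Fin (n+2), bas (X.δ i x) := by
  have : (Cs X).d (n+1) n = ∑ i : Fin (n + 2), (-1 : ℤ) ^ (i : ℕ) •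
     (((SimplicialObject.whiskering _ _).obj (ModuleCat.free (ZMod 2))).obj X).δ i := by
    exact alternatingFaceMapComplex_obj_d _ _
  have h3 := congrArg (fun (φ : (Cs X).X (n+1) ⟶ (Cs X).X n) => φ.hom (bas x)) this
  refine h3.trans ?_
  refine Eq.trans (congrArg (fun (ψ : (Cs X).X (n+1) →ₗ[ZMod 2] (Cs X).X n) => ψ (bas x))
    (ModuleCat.hom_sum (M := (Cs X).X (n+1)) (N := (Cs X).X n) _ Finset.univ)) ?_
  refine (LinearMap.sum_apply _ _ _).trans ?_
  refine Finset.sum_congr rfl fun i _ => ?_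
  have h2 : ∀ (m : ℕ) (y : (Cs X).X n), ((-1 : ℤ)^m) • y = y := by
    intro m y
    rcases neg_one_pow_eq_or ℤ m with h | h
    · rw [h, one_smul]
    · rw [h, neg_smul, one_smul]
      exact ZModModule.neg_eq_self y
  refine (h2 _ _).trans ?_
  exact Finsupp.mapDomain_single

lemma ch_ind {X : SSet.{0}} {n : ℕ} {p : (Cs X).X n → Prop} (c : (Cs X).X n)
    (h0 : p 0) (hb : ∀ x, p (bas x)) (ha : ∀ a b, p a → p b → p (a + b)) : p c := by
  obtain ⟨c, rfl⟩ := (toCh X n).surjective c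
  induction c using Finsupp.induction_linear with
  | zero => simpa using h0
  | add f g hf hg => rw [map_add]; exact ha _ _ hf hg
  | single a b =>
    have : b = 0 ∨ b = 1 := by revert b; decide
    rcases this with rfl | rfl
    · simpa using h0
    · exact hb a

lemma lin_ext {X : SSet.{0}} {n : ℕ} {M : Type*} [AddCommMonoid M] [Module (ZMod 2) M]
    {f g : (Cs X).X n →ₗ[ZMod 2] M} (h : ∀ x, f (bas x) = g (bas x)) : f = g := by
  refine LinearMap.ext fun c => ?_
  refine ch_ind (p := fun c => f c = g c) c (by rw [map_zero, map_zero]) h (fun a b ha hb => by rw [map_add, map_add, ha, hb])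

/-- homotopic maps of simplicial sets are equal on homology -/
lemma homologyMap_eq_of_homotopy {X Y : SSet.{0}} {f g : X ⟶ Y} (H : SSet.Homotopy f g) (n : ℕ) :
    HomologicalComplex.homologyMap (CsF.map f) n = HomologicalComplex.homologyMap (CsF.map g) n :=
  Homotopy.homologyMap_eq (SimplicialObject.Homotopy.toChainHomotopy
    (H.toSimplicialObjectHomotopy.whiskerRight (ModuleCat.free (ZMod 2)))) n

/-! ## Homology classes -/
section cls
open HomologicalComplex
variable {K L : ChainComplex (ModuleCat.{0} (ZMod 2)) ℕ}

/-- The predecessor degree. -/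
noncomputable abbrev nx (n : ℕ) : ℕ := (ComplexShape.down ℕ).next n

lemma nx_succ (n : ℕ) : nx (n+1) = n := ChainComplex.next_nat_succ n
lemma nx_zero : nx 0 = 0 := ChainComplex.next_nat_zero

/-- homology class of a cycle -/
noncomputable def cls (K : ChainComplex (ModuleCat.{0} (ZMod 2)) ℕ) (n : ℕ) :
    LinearMap.ker (K.d n (nx n)).hom →ₗ[ZMod 2] K.homology n :=
  (K.homologyπ n).hom ∘ₗ (K.sc n).moduleCatCyclesIso.inv.hom

lemma cls_surj (n : ℕ) : Function.Surjective (cls K n) := by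
  refine Function.Surjective.comp (g := (K.homologyπ n).hom) ?_ ?_
  · exact (ModuleCat.epi_iff_surjective _).1 inferInstance
  · exact (ModuleCat.epi_iff_surjective _).1 inferInstance

lemma iCycles_inv (n : ℕ) (x : LinearMap.ker (K.d n (nx n)).hom) :
    (K.iCycles n).hom ((K.sc n).moduleCatCyclesIso.inv.hom x) = x.1 := by
  have := (K.sc n).moduleCatCyclesIso_inv_iCycles
  exact congr($(this) x)

lemma cls_map (f : K ⟶ L) (n : ℕ) (x : LinearMap.ker (K.d n (nx n)).hom)
    (y : LinearMap.ker (L.d n (nx n)).hom) (h : y.1 = f.f n x.1) :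
    (homologyMap f n).hom (cls K n x) = cls L n y := by
  have h1 := congr($(homologyπ_naturality f n) ((K.sc n).moduleCatCyclesIso.inv.hom x))
  refine h1.trans ?_
  refine congrArg (L.homologyπ n).hom ?_
  apply (ModuleCat.mono_iff_injective (L.iCycles n)).1 inferInstance
  refine Eq.trans ?_ (iCycles_inv n y).symm
  rw [h, ← iCycles_inv n x]
  exact congr($(cyclesMap_i f n) ((K.sc n).moduleCatCyclesIso.inv.hom x))

lemma cls_eq_zero (n : ℕ) (x : LinearMap.ker (K.d n (nx n)).hom) :
    cls K n x = 0 ↔ ∃ y, (K.d (n+1) n).hom y = x.1 := by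
  have e := congr($((K.sc n).moduleCatCyclesIso_inv_π) x)
  have e2 : cls K n x = (K.sc n).moduleCatHomologyIso.inv.hom
    ((LinearMap.range (K.sc n).moduleCatToCycles).mkQ x) := e
  have inj : Function.Injective (K.sc n).moduleCatHomologyIso.inv.hom :=
    (ModuleCat.mono_iff_injective _).1 inferInstance
  have hp : (ComplexShape.down ℕ).prev n = n + 1 := ChainComplex.prev ℕ n
  have e3 : cls K n x = 0 ↔ x ∈ LinearMap.range (K.sc n).moduleCatToCycles := by
    rw [e2]
    constructor
    · intro h
      have := inj (h.trans (map_zero _).symm)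
      exact (Submodule.Quotient.mk_eq_zero _).1 this
    · intro h
      have : (LinearMap.range (K.sc n).moduleCatToCycles).mkQ x = 0 :=
        (Submodule.Quotient.mk_eq_zero _).2 h
      exact (congrArg _ this).trans (map_zero _)
  rw [e3]
  have key : ∀ m, (ComplexShape.down ℕ).prev n = m →
      ((∃ y, (K.d ((ComplexShape.down ℕ).prev n) n).hom y = x.1) ↔
        ∃ y, (K.d m n).hom y = x.1) := by
    rintro m rfl; rfl
  refine Iff.trans ?_ (key _ hp)
  constructor
  · rintro ⟨y, hy⟩
    exact ⟨y, congrArg Subtype.val hy⟩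
  · rintro ⟨y, hy⟩
    exact ⟨y, Subtype.ext hy⟩
end cls
end SklProof


namespace SklProof
open Simplicial Opposite

/-! ## Long exact sequences and the algebraic Mayer-Vietoris sequence -/
section les
open HomologicalComplex

/-- Chain complexes of `ℤ/2`-modules. -/
abbrev Cx := ChainComplex (ModuleCat.{0} (ZMod 2)) ℕ

/-- The linear map induced on homology. -/
noncomputable def Hm {K L : Cx} (f : K ⟶ L) (n : ℕ) : K.homology n →ₗ[ZMod 2] L.homology n :=
  (homologyMap f n).hom

lemma Hm_id (K : Cx) (n : ℕ) : Hm (𝟙 K) n = LinearMap.id := by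
  unfold Hm; rw [homologyMap_id]; rfl

lemma Hm_comp {K L M : Cx} (f : K ⟶ L) (g : L ⟶ M) (n : ℕ) :
    Hm (f ≫ g) n = Hm g n ∘ₗ Hm f n := by
  unfold Hm; rw [homologyMap_comp]; rfl

lemma Hm_add {K L : Cx} (f g : K ⟶ L) (n : ℕ) :
    Hm (f + g) n = Hm f n + Hm g n := by
  unfold Hm; rw [homologyMap_add]; rfl

lemma Hm_zero {K L : Cx} (n : ℕ) : Hm (0 : K ⟶ L) n = 0 := by
  unfold Hm; rw [homologyMap_zero]; rfl

lemma les {A B C : Cx} (f : A ⟶ B) (g : B ⟶ C)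
    (w : f ≫ g = 0) (inj : ∀ n, Function.Injective (f.f n))
    (surj : ∀ n, Function.Surjective (g.f n))
    (ex : ∀ n x, (g.f n).hom x = 0 → ∃ y, (f.f n).hom y = x) :
    ∃ δ : ∀ n, C.homology (n+1) →ₗ[ZMod 2] A.homology n,
      (∀ n, LinearMap.range (Hm f n) = LinearMap.ker (Hm g n)) ∧
      (∀ n, LinearMap.range (Hm g (n+1)) = LinearMap.ker (δ n)) ∧
      (∀ n, LinearMap.range (δ n) = LinearMap.ker (Hm f n)) ∧
      Function.Surjective (Hm g 0) := by
  let S : ShortComplex Cx := ShortComplex.mk f g w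
  have hS : S.ShortExact := by
    apply HomologicalComplex.shortExact_of_degreewise_shortExact
    intro n
    have e : (S.map (HomologicalComplex.eval _ _ n)).Exact := by
      rw [ShortComplex.moduleCat_exact_iff]
      exact ex n
    have m : Mono (S.map (HomologicalComplex.eval _ _ n)).f :=
      (ModuleCat.mono_iff_injective _).2 (inj n)
    have p : Epi (S.map (HomologicalComplex.eval _ _ n)).g :=
      (ModuleCat.epi_iff_surjective _).2 (surj n)
    exact ⟨e⟩
  refine ⟨fun n => (hS.δ (n+1) n (by simp)).hom, fun n => ?_, fun n => ?_, fun n => ?_, ?_⟩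
  · exact (hS.homology_exact₂ n).moduleCat_range_eq_ker
  · exact (hS.homology_exact₃ (n+1) n (by simp)).moduleCat_range_eq_ker
  · exact (hS.homology_exact₁ (n+1) n (by simp)).moduleCat_range_eq_ker
  · intro c
    obtain ⟨⟨x, hx⟩, rfl⟩ := cls_surj (K := C) 0 c
    obtain ⟨y, hy⟩ := surj 0 x
    have h0 : B.d 0 (nx 0) = 0 := B.shape _ _ (by rw [nx_zero]; simp)
    have hy0 : y ∈ LinearMap.ker (B.d 0 (nx 0)).hom := by
      rw [h0]; exact LinearMap.mem_ker.2 rfl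
    exact ⟨cls B 0 ⟨y, hy0⟩, cls_map g 0 ⟨y, hy0⟩ ⟨x, hx⟩ hy.symm⟩

/-- product complex -/
noncomputable def prodCx (K L : Cx) : Cx where
  X n := ModuleCat.of (ZMod 2) (K.X n × L.X n)
  d i j := ModuleCat.ofHom ((K.d i j).hom.prodMap (L.d i j).hom)
  shape i j h := by
    apply ModuleCat.hom_ext
    rw [K.shape i j h, L.shape i j h]
    rfl
  d_comp_d' i j k _ _ := by
    apply ModuleCat.hom_ext
    refine LinearMap.ext fun x => Prod.ext ?_ ?_
    · exact congr($(K.d_comp_d i j k) x.1)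
    · exact congr($(L.d_comp_d i j k) x.2)

variable {K L M : Cx}

/-- first inclusion -/
noncomputable def inlCx (K L : Cx) : K ⟶ prodCx K L where
  f n := ModuleCat.ofHom (LinearMap.inl (ZMod 2) (K.X n) (L.X n))
  comm' i j _ := by
    apply ModuleCat.hom_ext
    refine LinearMap.ext fun x => Prod.ext rfl ?_
    exact (map_zero (L.d i j).hom)
/-- second inclusion -/
noncomputable def inrCx (K L : Cx) : L ⟶ prodCx K L where
  f n := ModuleCat.ofHom (LinearMap.inr (ZMod 2) (K.X n) (L.X n))
  comm' i j _ := by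
    apply ModuleCat.hom_ext
    refine LinearMap.ext fun x => Prod.ext ?_ rfl
    exact (map_zero (K.d i j).hom)
/-- first projection -/
noncomputable def fstCx (K L : Cx) : prodCx K L ⟶ K where
  f n := ModuleCat.ofHom (LinearMap.fst (ZMod 2) (K.X n) (L.X n))
/-- second projection -/
noncomputable def sndCx (K L : Cx) : prodCx K L ⟶ L where
  f n := ModuleCat.ofHom (LinearMap.snd (ZMod 2) (K.X n) (L.X n))

lemma cx_hom_ext {K L : Cx} {f g : K ⟶ L} (h : ∀ n x, (f.f n).hom x = (g.f n).hom x) : f = g := by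
  apply HomologicalComplex.hom_ext
  intro n
  apply ModuleCat.hom_ext
  exact LinearMap.ext (h n)

lemma add_f_apply {K L : Cx} (f g : K ⟶ L) (n : ℕ) (x : K.X n) :
    ((f + g).f n).hom x = (f.f n).hom x + (g.f n).hom x := rfl

lemma comp_f_apply {K L M : Cx} (f : K ⟶ L) (g : L ⟶ M) (n : ℕ) (x : K.X n) :
    ((f ≫ g).f n).hom x = (g.f n).hom ((f.f n).hom x) := rfl

lemma total : fstCx K L ≫ inlCx K L + sndCx K L ≫ inrCx K L = 𝟙 _ := by
  apply cx_hom_ext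
  intro n x
  exact Prod.ext (add_zero _) (zero_add _)

lemma inl_fst : inlCx K L ≫ fstCx K L = 𝟙 _ := cx_hom_ext fun _ _ => rfl
lemma inr_snd : inrCx K L ≫ sndCx K L = 𝟙 _ := cx_hom_ext fun _ _ => rfl
lemma inl_snd : inlCx K L ≫ sndCx K L = 0 := cx_hom_ext fun _ _ => rfl
lemma inr_fst : inrCx K L ≫ fstCx K L = 0 := cx_hom_ext fun _ _ => rfl

/-- The exactness properties of a Mayer-Vietoris sequence (with mod 2 coefficients). -/
def MV {P U V W : Cx} (a : P ⟶ U) (b : P ⟶ V) (i : U ⟶ W) (j : V ⟶ W) : Prop :=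
  ∃ δ : ∀ n, W.homology (n+1) →ₗ[ZMod 2] P.homology n,
    (∀ n y z, Hm i n y = Hm j n z → ∃ w, Hm a n w = y ∧ Hm b n w = z) ∧
    (∀ n x, δ n x = 0 ↔ ∃ y z, x = Hm i (n+1) y + Hm j (n+1) z) ∧
    (∀ n w, (∃ x, δ n x = w) ↔ (Hm a n w = 0 ∧ Hm b n w = 0)) ∧
    (∀ x, ∃ y z, x = Hm i 0 y + Hm j 0 z)

lemma add_self_mod2 {M : Type*} [AddCommGroup M] [Module (ZMod 2) M] (x : M) : x + x = 0 :=
  ZModModule.add_self x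

lemma eq_of_add_mod2 {M : Type*} [AddCommGroup M] [Module (ZMod 2) M] {x y : M}
    (h : x + y = 0) : x = y := by
  have := eq_neg_of_add_eq_zero_left h
  rwa [ZModModule.neg_eq_self] at this

lemma MV_of_chains {P U V W : Cx} (a : P ⟶ U) (b : P ⟶ V) (i : U ⟶ W) (j : V ⟶ W)
    (sq : a ≫ i = b ≫ j) (inj : ∀ n, Function.Injective (a.f n))
    (surj : ∀ n x, ∃ u v, (i.f n).hom u + (j.f n).hom v = x)
    (ex : ∀ n u v, (i.f n).hom u = (j.f n).hom v → ∃ p, (a.f n).hom p = u ∧ (b.f n).hom p = v) :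
    MV a b i j := by
  let f : P ⟶ prodCx U V := a ≫ inlCx U V + b ≫ inrCx U V
  let g : prodCx U V ⟶ W := fstCx U V ≫ i + sndCx U V ≫ j
  have hf1 : f ≫ fstCx U V = a := by
    simp only [f, Preadditive.add_comp, Category.assoc, inl_fst, inr_fst, Category.comp_id,
      Limits.comp_zero, add_zero]
  have hf2 : f ≫ sndCx U V = b := by
    simp only [f, Preadditive.add_comp, Category.assoc, inl_snd, inr_snd, Category.comp_id,
      Limits.comp_zero, zero_add]
  have hg1 : inlCx U V ≫ g = i := by
    simp only [g, Preadditive.comp_add, ← Category.assoc, inl_snd, inl_fst, Category.id_comp,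
      Limits.zero_comp, add_zero]
  have hg2 : inrCx U V ≫ g = j := by
    simp only [g, Preadditive.comp_add, ← Category.assoc, inr_snd, inr_fst, Category.id_comp,
      Limits.zero_comp, zero_add]
  have w : f ≫ g = 0 := by
    have : f ≫ g = a ≫ i + b ≫ j := by
      simp only [g, Preadditive.comp_add]
      rw [← Category.assoc, ← Category.assoc, hf1, hf2]
    rw [this, sq]
    apply cx_hom_ext
    intro n x
    exact add_self_mod2 _
  have hff : ∀ n p, (f.f n).hom p = ((a.f n).hom p, (b.f n).hom p) := by
    intro n p
    exact Prod.ext (congr((($hf1).f n).hom p)) (congr((($hf2).f n).hom p))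
  have hgf : ∀ n x, (g.f n).hom x = (i.f n).hom x.1 + (j.f n).hom x.2 := fun n x => rfl
  obtain ⟨δ, h1, h2, h3, h4⟩ := les f g w
    (fun n x y hxy => inj n (by
      have := (hff n x).symm.trans (hxy.trans (hff n y))
      exact congrArg Prod.fst this))
    (fun n x => by obtain ⟨u, v, h⟩ := surj n x; exact ⟨(u, v), h⟩)
    (fun n x hx => by
      obtain ⟨p, h, h'⟩ := ex n x.1 x.2 (eq_of_add_mod2 ((hgf n x).symm.trans hx))
      exact ⟨p, (hff n p).trans (Prod.ext h h')⟩)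
  have split : ∀ n x, Hm g n x = Hm i n (Hm (fstCx U V) n x) + Hm j n (Hm (sndCx U V) n x) := by
    intro n x
    simp only [g, Hm_add, Hm_comp]; rfl
  have hi : ∀ n y, Hm i n y = Hm g n (Hm (inlCx U V) n y) := by
    intro n y
    conv_lhs => rw [← hg1, Hm_comp]
    rfl
  have hj : ∀ n y, Hm j n y = Hm g n (Hm (inrCx U V) n y) := by
    intro n y
    conv_lhs => rw [← hg2, Hm_comp]
    rfl
  have ha : ∀ n y, Hm a n y = Hm (fstCx U V) n (Hm f n y) := by
    intro n y
    conv_lhs => rw [← hf1, Hm_comp]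
    rfl
  have hb : ∀ n y, Hm b n y = Hm (sndCx U V) n (Hm f n y) := by
    intro n y
    conv_lhs => rw [← hf2, Hm_comp]
    rfl
  have hsurj : ∀ n y z, Hm g n (Hm (inlCx U V) n y + Hm (inrCx U V) n z) =
      Hm i n y + Hm j n z := by
    intro n y z
    rw [map_add, ← hi, ← hj]
  have hfst : ∀ n y z, Hm (fstCx U V) n (Hm (inlCx U V) n y + Hm (inrCx U V) n z) = y := by
    intro n y z
    rw [map_add, ← LinearMap.comp_apply, ← LinearMap.comp_apply, ← Hm_comp, ← Hm_comp, inl_fst,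
      inr_fst, Hm_id, Hm_zero]
    exact add_zero _
  have hsnd : ∀ n y z, Hm (sndCx U V) n (Hm (inlCx U V) n y + Hm (inrCx U V) n z) = z := by
    intro n y z
    rw [map_add, ← LinearMap.comp_apply, ← LinearMap.comp_apply, ← Hm_comp, ← Hm_comp, inl_snd,
      inr_snd, Hm_id, Hm_zero]
    exact zero_add _
  have htot : ∀ n x, x = Hm (inlCx U V) n (Hm (fstCx U V) n x)
      + Hm (inrCx U V) n (Hm (sndCx U V) n x) := by
    intro n x
    have := congrArg (fun φ => Hm φ n x) (total (K := U) (L := V))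
    simp only [Hm_add, Hm_comp, Hm_id] at this
    exact this.symm
  refine ⟨δ, ?_, ?_, ?_, ?_⟩
  · intro n y z h
    have : Hm (inlCx U V) n y + Hm (inrCx U V) n z ∈ LinearMap.ker (Hm g n) := by
      rw [LinearMap.mem_ker, hsurj, h]
      exact add_self_mod2 _
    rw [← h1] at this
    obtain ⟨p, hp⟩ := this
    exact ⟨p, by rw [ha, hp, hfst], by rw [hb, hp, hsnd]⟩
  · intro n x
    rw [← LinearMap.mem_ker, ← h2]
    constructor
    · rintro ⟨y, rfl⟩
      exact ⟨_, _, split _ y⟩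
    · rintro ⟨y, z, rfl⟩
      exact ⟨_, hsurj _ y z⟩
  · intro n w'
    have : (∃ x, δ n x = w') ↔ w' ∈ LinearMap.range (δ n) := Iff.rfl
    rw [this, h3, LinearMap.mem_ker]
    constructor
    · intro h
      rw [ha, hb, h, map_zero, map_zero]
      exact ⟨rfl, rfl⟩
    · rintro ⟨h, h'⟩
      rw [htot n (Hm f n w'), ← ha, ← hb, h, h', map_zero, map_zero, add_zero]
  · intro x
    obtain ⟨y, rfl⟩ := h4 x
    exact ⟨_, _, split _ y⟩

/-- Replace the total complex by a quasi-isomorphic one. -/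
lemma MV_of_bij {P U V S W : Cx} {a : P ⟶ U} {b : P ⟶ V} {i : U ⟶ S} {j : V ⟶ S}
    (h : MV a b i j) (q : S ⟶ W) (hq : ∀ n, Function.Bijective (Hm q n)) :
    MV a b (i ≫ q) (j ≫ q) := by
  obtain ⟨δ, h1, h2, h3, h4⟩ := h
  let e : ∀ n, S.homology n ≃ₗ[ZMod 2] W.homology n := fun n => LinearEquiv.ofBijective _ (hq n)
  have he : ∀ n x, e n x = Hm q n x := fun n x => rfl
  refine ⟨fun n => δ n ∘ₗ (e (n+1)).symm.toLinearMap, ?_, ?_, ?_, ?_⟩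
  · intro n y z h
    rw [Hm_comp, Hm_comp] at h
    exact h1 n y z ((hq n).1 h)
  · intro n x
    obtain ⟨x, rfl⟩ := (e (n+1)).surjective x
    have hs : (e (n+1)).symm (e (n+1) x) = x := (e (n+1)).symm_apply_apply x
    have hs2 : (δ n ∘ₗ (e (n+1)).symm.toLinearMap) (e (n+1) x) = δ n x := congrArg (δ n) hs
    rw [hs2, h2]
    simp only [LinearMap.comp_apply, Hm_comp, he, ← map_add]
    exact exists_congr fun y => exists_congr fun z => (hq _).1.eq_iff.symm
  · intro n w
    rw [← h3]
    constructor
    · rintro ⟨x, hx⟩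
      exact ⟨_, hx⟩
    · rintro ⟨x, hx⟩
      exact ⟨e (n+1) x, by simpa using hx⟩
  · intro x
    obtain ⟨x, rfl⟩ := (e 0).surjective x
    obtain ⟨y, z, rfl⟩ := h4 x
    exact ⟨y, z, by rw [Hm_comp, Hm_comp, he, map_add]; rfl⟩

end les

lemma MV_SSet {P U V S : SSet.{0}} (a : P ⟶ U) (b : P ⟶ V) (i : U ⟶ S) (j : V ⟶ S)
    (sq : a ≫ i = b ≫ j)
    (ha : ∀ n : ℕ, Function.Injective (a.app (op ⦋n⦌)))
    (hi : ∀ n : ℕ, Function.Injective (i.app (op ⦋n⦌)))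
    (hj : ∀ n : ℕ, Function.Injective (j.app (op ⦋n⦌)))
    (hsurj : ∀ (n : ℕ) (s : S _⦋n⦌), (∃ u, i.app (op ⦋n⦌) u = s) ∨ (∃ v, j.app (op ⦋n⦌) v = s))
    (hex : ∀ (n : ℕ) (u : U _⦋n⦌) (v : V _⦋n⦌), i.app (op ⦋n⦌) u = j.app (op ⦋n⦌) v →
      ∃ p, a.app (op ⦋n⦌) p = u) :
    MV (CsF.map a) (CsF.map b) (CsF.map i) (CsF.map j) := by
  have minj : ∀ {A B : SSet.{0}} (f : A ⟶ B) (n : ℕ), Function.Injective (f.app (op ⦋n⦌)) →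
      Function.Injective ((CsF.map f).f n).hom := by
    intro A B f n hf
    exact Finsupp.mapDomain_injective hf
  have sqC : ∀ n p, ((CsF.map i).f n).hom (((CsF.map a).f n).hom p) =
      ((CsF.map j).f n).hom (((CsF.map b).f n).hom p) := by
    intro n p
    have : CsF.map a ≫ CsF.map i = CsF.map b ≫ CsF.map j := by
      rw [← CsF.map_comp, sq, CsF.map_comp]
    exact congr((($this).f n).hom p)
  apply MV_of_chains
  · rw [← CsF.map_comp, sq, CsF.map_comp]
  · intro n
    exact minj a n (ha n)
  · intro n x
    refine ch_ind (p := fun x => ∃ u v, ((CsF.map i).f n).hom u + ((CsF.map j).f n).hom v = x) x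
      ⟨0, 0, by rw [map_zero, map_zero, add_zero]⟩ ?_ ?_
    · intro s
      rcases hsurj n s with ⟨u, rfl⟩ | ⟨v, rfl⟩
      · exact ⟨bas u, 0, by rw [map_zero, add_zero]; exact map_bas i u⟩
      · exact ⟨0, bas v, by rw [map_zero, zero_add]; exact map_bas j v⟩
    · rintro _ _ ⟨u, v, rfl⟩ ⟨u', v', rfl⟩
      exact ⟨u + u', v + v', by rw [map_add, map_add]; abel⟩
  · intro n u v h
    obtain ⟨u, rfl⟩ := (toCh U n).surjective u
    obtain ⟨v, rfl⟩ := (toCh V n).surjective v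
    have h' : u.mapDomain (i.app (op ⦋n⦌)) = v.mapDomain (j.app (op ⦋n⦌)) := h
    have hsup : (↑u.support : Set (U _⦋n⦌)) ⊆ Set.range (a.app (op ⦋n⦌)) := by
      intro x hx
      have hx0 : u x ≠ 0 := Finsupp.mem_support_iff.1 hx
      have h1 : (u.mapDomain (i.app (op ⦋n⦌))) (i.app (op ⦋n⦌) x) ≠ 0 := by
        rwa [Finsupp.mapDomain_apply (hi n)]
      rw [h'] at h1
      by_contra hcon
      apply h1
      apply Finsupp.mapDomain_of_notMem_range
      rintro ⟨y, hy⟩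
      exact hcon (hex n x y hy.symm)
    have key := Finsupp.mapDomain_comapDomain _ (ha n) u hsup
    refine ⟨toCh P n (u.comapDomain _ (ha n).injOn), ?_, ?_⟩
    · exact (map_toCh a _).trans (congrArg _ key)
    · apply minj j n (hj n)
      rw [← sqC]
      refine Eq.trans ?_ h
      exact congrArg _ ((map_toCh a _).trans (congrArg _ key))

end SklProof


namespace SklProof
open Simplicial Opposite

/-! ## Algebraic subdivision of chains of tuples -/
section tuples

/-- Extend a map defined on simplices linearly to chains. -/
noncomputable def lin {X : SSet.{0}} {n : ℕ} {M : Type*} [AddCommGroup M] [Module (ZMod 2) M]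
    (φ : X _⦋n⦌ → M) : (Cs X).X n →ₗ[ZMod 2] M :=
  (Finsupp.linearCombination (ZMod 2) φ) ∘ₗ (toCh X n).symm.toLinearMap

lemma lin_bas {X : SSet.{0}} {n : ℕ} {M : Type*} [AddCommGroup M] [Module (ZMod 2) M]
    (φ : X _⦋n⦌ → M) (x : X _⦋n⦌) : lin φ (bas x) = φ x := by
  refine (Finsupp.linearCombination_single (ZMod 2) 1 x).trans (one_smul _ _)

/-- The boundary as a linear map. -/
noncomputable def dl (X : SSet.{0}) (n : ℕ) : (Cs X).X (n+1) →ₗ[ZMod 2] (Cs X).X n :=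
  ((Cs X).d (n+1) n).hom

lemma dl_bas {X : SSet.{0}} {n : ℕ} (x : X _⦋n+1⦌) :
    dl X n (bas x) = ∑ i : Fin (n+2), bas (X.δ i x) := d_bas x

lemma dl_dl {X : SSet.{0}} {n : ℕ} (c : (Cs X).X (n+2)) : dl X n (dl X (n+1) c) = 0 :=
  congr($((Cs X).d_comp_d (n+2) (n+1) n) c)

/-- chain map as linear map -/
noncomputable def cm {X Y : SSet.{0}} (f : X ⟶ Y) (n : ℕ) : (Cs X).X n →ₗ[ZMod 2] (Cs Y).X n :=
  ((CsF.map f).f n).hom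

lemma cm_bas {X Y : SSet.{0}} (f : X ⟶ Y) {n : ℕ} (x : X _⦋n⦌) :
    cm f n (bas x) = bas (f.app _ x) := map_bas f x

lemma cm_dl {X Y : SSet.{0}} (f : X ⟶ Y) {n : ℕ} (c : (Cs X).X (n+1)) :
    cm f n (dl X n c) = dl Y n (cm f (n+1) c) :=
  (congr($((CsF.map f).comm (n+1) n) c)).symm

/-- The simplicial set of tuples in a type. -/
def TT (E : Type) : SSet.{0} where
  obj n := Fin (n.unop.len + 1) → E
  map θ := ↾(fun v => v ∘ θ.unop.toOrderHom)
  map_id := by intros; rfl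
  map_comp := by intros; rfl

/-- the tuple as a simplex -/
def tp {E : Type} {n : ℕ} (v : Fin (n+1) → E) : (TT E) _⦋n⦌ := v

lemma TT_δ {E : Type} {n : ℕ} (v : Fin (n+2) → E) (i : Fin (n+2)) :
    (TT E).δ i (tp v) = tp (fun j => v (i.succAbove j)) := rfl

lemma dl_tp {E : Type} {n : ℕ} (v : Fin (n+2) → E) :
    dl (TT E) n (bas (tp v)) = ∑ i : Fin (n+2), bas (tp fun j => v (i.succAbove j)) :=
  dl_bas (tp v)

/-- functoriality of tuples -/
def TTmap {E E' : Type} (f : E → E') : TT E ⟶ TT E' where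
  app n := ↾(fun v => f ∘ v)
  naturality := by intros; rfl

variable {E : Type}

lemma tp_ext {n : ℕ} {M : Type*} [AddCommGroup M] [Module (ZMod 2) M]
    {f g : (Cs (TT E)).X n →ₗ[ZMod 2] M}
    (h : ∀ v : Fin (n+1) → E, f (bas (tp v)) = g (bas (tp v))) : f = g := lin_ext h

lemma tp_congr {n : ℕ} {v w : Fin (n+1) → E} (h : ∀ i, v i = w i) :
    bas (tp v) = bas (tp w) := by
  rw [funext h]

/-- Cone on a chain of tuples. -/
noncomputable def cone (b : E) (n : ℕ) : (Cs (TT E)).X n →ₗ[ZMod 2] (Cs (TT E)).X (n+1) :=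
  lin (fun v => bas (tp (Fin.cons b v : Fin (n+2) → E)))

lemma cone_bas (b : E) {n : ℕ} (v : Fin (n+1) → E) :
    cone b n (bas (tp v)) = bas (tp (Fin.cons b v : Fin (n+2) → E)) := lin_bas _ _

lemma dl_cone (b : E) {n : ℕ} (c : (Cs (TT E)).X (n+1)) :
    dl _ _ (cone b (n+1) c) = c + cone b n (dl _ _ c) := by
  have : dl _ _ ∘ₗ (cone b (n+1)) = LinearMap.id + cone b n ∘ₗ (dl _ _) := by
    apply tp_ext
    intro v
    change dl _ _ (cone b (n+1) (bas (tp v))) = bas (tp v) + cone b n (dl _ _ (bas (tp v)))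
    rw [cone_bas, dl_tp, dl_tp, Fin.sum_univ_succ, map_sum]
    congr 1
    refine Finset.sum_congr rfl fun i _ => ?_
    rw [cone_bas]
    refine tp_congr fun j => ?_
    refine Fin.cases ?_ (fun j => ?_) j
    · rfl
    · simp only [Fin.succ_succAbove_succ, Fin.cons_succ]
  exact congr($this c)

lemma dl_cone_zero (b : E) (v : Fin 1 → E) :
    dl _ _ (cone b 0 (bas (tp v))) = bas (tp v) + bas (tp (fun _ : Fin 1 => b)) := by
  rw [cone_bas, dl_tp, Fin.sum_univ_two]
  refine congrArg₂ (· + ·) rfl (tp_congr fun j => ?_)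
  obtain rfl : j = 0 := Fin.fin_one_eq_zero j
  rfl

variable (β : ∀ n : ℕ, (Fin (n+1) → E) → E)

/-- barycentric subdivision of tuples -/
noncomputable def sd (n : ℕ) : (Cs (TT E)).X n →ₗ[ZMod 2] (Cs (TT E)).X n :=
  Nat.rec (motive := fun n => (Cs (TT E)).X n →ₗ[ZMod 2] (Cs (TT E)).X n) LinearMap.id
    (fun n sdn => lin (fun v => cone (β (n+1) v) n (sdn (dl _ _ (bas v))))) n

/-- the subdivision homotopy -/
noncomputable def sdT (n : ℕ) : (Cs (TT E)).X n →ₗ[ZMod 2] (Cs (TT E)).X (n+1) :=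
  Nat.rec (motive := fun n => (Cs (TT E)).X n →ₗ[ZMod 2] (Cs (TT E)).X (n+1)) 0
    (fun n T => lin (fun v => cone (β (n+1) v) (n+1) (bas v + T (dl _ _ (bas v))))) n

lemma sd_succ {n : ℕ} (v : Fin (n+2) → E) :
    sd β (n+1) (bas (tp v)) = cone (β (n+1) v) n (sd β n (dl _ _ (bas (tp v)))) := lin_bas _ _

lemma sdT_succ {n : ℕ} (v : Fin (n+2) → E) :
    sdT β (n+1) (bas (tp v)) =
      cone (β (n+1) v) (n+1) (bas (tp v) + sdT β n (dl _ _ (bas (tp v)))) := lin_bas _ _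

lemma dl_sd (n : ℕ) : ∀ (c : (Cs (TT E)).X (n+1)),
    dl _ _ (sd β (n+1) c) = sd β n (dl _ _ c) := by
  induction n with
  | zero =>
    intro c
    have : dl _ _ ∘ₗ sd β (0+1) = sd β 0 ∘ₗ dl _ _ := by
      apply tp_ext
      intro v
      change dl _ _ (sd β (0+1) (bas (tp v))) = dl _ _ (bas (tp v))
      rw [sd_succ]
      change dl _ _ (cone (β _ v) 0 (dl _ _ (bas (tp v)))) = dl _ _ (bas (tp v))
      rw [dl_tp, Fin.sum_univ_two, map_add, map_add, dl_cone_zero, dl_cone_zero]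
      generalize bas (tp (fun _ : Fin 1 => β _ v)) = z
      rw [add_add_add_comm, add_self_mod2 z, add_zero]
    exact congr($this c)
  | succ n ih =>
    intro c
    have : dl _ _ ∘ₗ sd β (n+1+1) = sd β (n+1) ∘ₗ dl _ _ := by
      apply tp_ext
      intro v
      change dl _ _ (sd β (n+1+1) (bas (tp v))) = sd β (n+1) (dl _ _ (bas (tp v)))
      rw [sd_succ, dl_cone, ih, dl_dl, map_zero, map_zero, add_zero]
    exact congr($this c)

lemma dl_sdT_zero (c : (Cs (TT E)).X 0) : dl _ _ (sdT β 0 c) = c + sd β 0 c := by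
  change dl _ _ 0 = c + c
  rw [add_self_mod2, map_zero]

lemma dl_sdT (n : ℕ) : ∀ (c : (Cs (TT E)).X (n+1)),
    dl _ _ (sdT β (n+1) c) = c + sd β (n+1) c + sdT β n (dl _ _ c) := by
  induction n with
  | zero =>
    intro c
    have : dl _ _ ∘ₗ sdT β (0+1) = LinearMap.id + sd β (0+1) + sdT β 0 ∘ₗ dl _ _ := by
      apply tp_ext
      intro v
      change dl _ _ (sdT β (0+1) (bas (tp v))) =
        bas (tp v) + sd β (0+1) (bas (tp v)) + sdT β 0 (dl _ _ (bas (tp v)))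
      rw [sdT_succ, dl_cone, map_add, dl_sdT_zero, sd_succ, ← add_assoc (dl _ _ _), add_self_mod2,
        zero_add (sd β 0 _)]
      abel
    exact congr($this c)
  | succ n ih =>
    intro c
    have : dl _ _ ∘ₗ sdT β (n+1+1) = LinearMap.id + sd β (n+1+1) + sdT β (n+1) ∘ₗ dl _ _ := by
      apply tp_ext
      intro v
      change dl _ _ (sdT β (n+1+1) (bas (tp v))) =
        bas (tp v) + sd β (n+1+1) (bas (tp v)) + sdT β (n+1) (dl _ _ (bas (tp v)))
      rw [sdT_succ, dl_cone, map_add, ih, sd_succ, dl_dl, map_zero, add_zero,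
        ← add_assoc (dl _ _ _), add_self_mod2, zero_add]
      abel
    exact congr($this c)

lemma cm_TT {E' : Type} (f : E → E') {n : ℕ} (v : Fin (n+1) → E) :
    cm (TTmap f) n (bas (tp v)) = bas (tp (f ∘ v)) := cm_bas _ _

lemma cm_cone {E' : Type} (f : E → E') (b : E) {n : ℕ} (c : (Cs (TT E)).X n) :
    cm (TTmap f) (n+1) (cone b n c) = cone (f b) n (cm (TTmap f) n c) := by
  have : cm (TTmap f) (n+1) ∘ₗ cone b n = cone (f b) n ∘ₗ cm (TTmap f) n := by
    apply tp_ext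
    intro v
    change cm (TTmap f) (n+1) (cone b n (bas (tp v))) = cone (f b) n (cm (TTmap f) n (bas (tp v)))
    rw [cm_TT, cone_bas, cone_bas, cm_TT]
    refine tp_congr fun j => ?_
    refine Fin.cases ?_ (fun j => ?_) j <;> rfl
  exact congr($this c)

lemma cm_sd {E' : Type} (f : E → E') (β' : ∀ n : ℕ, (Fin (n+1) → E') → E')
    (hf : ∀ n v, β' n (f ∘ v) = f (β n v)) (n : ℕ) : ∀ (c : (Cs (TT E)).X n),
    cm (TTmap f) n (sd β n c) = sd β' n (cm (TTmap f) n c) := by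
  induction n with
  | zero => exact fun c => rfl
  | succ n ih =>
    intro c
    have : cm (TTmap f) (n+1) ∘ₗ sd β (n+1) = sd β' (n+1) ∘ₗ cm (TTmap f) (n+1) := by
      apply tp_ext
      intro v
      change cm (TTmap f) (n+1) (sd β (n+1) (bas (tp v))) =
        sd β' (n+1) (cm (TTmap f) (n+1) (bas (tp v)))
      rw [sd_succ, cm_cone, ih, cm_dl, cm_TT, sd_succ, hf]
    exact congr($this c)

lemma cm_sdT {E' : Type} (f : E → E') (β' : ∀ n : ℕ, (Fin (n+1) → E') → E')
    (hf : ∀ n v, β' n (f ∘ v) = f (β n v)) (n : ℕ) : ∀ (c : (Cs (TT E)).X n),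
    cm (TTmap f) (n+1) (sdT β n c) = sdT β' n (cm (TTmap f) n c) := by
  induction n with
  | zero => exact fun c => map_zero _
  | succ n ih =>
    intro c
    have : cm (TTmap f) (n+1+1) ∘ₗ sdT β (n+1) = sdT β' (n+1) ∘ₗ cm (TTmap f) (n+1) := by
      apply tp_ext
      intro v
      change cm (TTmap f) (n+1+1) (sdT β (n+1) (bas (tp v))) =
        sdT β' (n+1) (cm (TTmap f) (n+1) (bas (tp v)))
      rw [sdT_succ, cm_cone, map_add, ih, cm_dl, cm_TT, sdT_succ, hf]
    exact congr($this c)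

end tuples

/-! ## Supports of chains -/

/-- chains supported on simplices with a property -/
noncomputable def Sp {X : SSet.{0}} {n : ℕ} (p : X _⦋n⦌ → Prop) :
    Submodule (ZMod 2) ((Cs X).X n) := Submodule.span (ZMod 2) (bas '' {x | p x})

lemma bas_mem_Sp {X : SSet.{0}} {n : ℕ} {p : X _⦋n⦌ → Prop} {x : X _⦋n⦌} (h : p x) :
    bas x ∈ Sp p := Submodule.subset_span ⟨x, h, rfl⟩

lemma Sp_map {X Y : SSet.{0}} {n m : ℕ} {p : X _⦋n⦌ → Prop} {q : Y _⦋m⦌ → Prop}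
    (f : (Cs X).X n →ₗ[ZMod 2] (Cs Y).X m) (h : ∀ x, p x → f (bas x) ∈ Sp q)
    {c : (Cs X).X n} (hc : c ∈ Sp p) : f c ∈ Sp q := by
  have : Sp p ≤ (Sp q).comap f := by
    refine Submodule.span_le.2 ?_
    rintro _ ⟨x, hx, rfl⟩
    exact h x hx
  exact this hc

lemma Sp_mono {X : SSet.{0}} {n : ℕ} {p q : X _⦋n⦌ → Prop} (h : ∀ x, p x → q x) :
    Sp p ≤ Sp q := by
  intro c hc
  exact Sp_map LinearMap.id (fun x hx => bas_mem_Sp (h x hx)) hc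

lemma Sp_exists {X : SSet.{0}} {n : ℕ} 
    (f : ℕ → (Cs X).X n →ₗ[ZMod 2] (Cs X).X n) (q : X _⦋n⦌ → Prop)
    (hmono : ∀ j c, f j c ∈ Sp q → f (j+1) c ∈ Sp q)
    (h : ∀ x, ∃ j, f j (bas x) ∈ Sp q) (c : (Cs X).X n) : ∃ j, f j c ∈ Sp q := by
  have hm : ∀ c j k, j ≤ k → f j c ∈ Sp q → f k c ∈ Sp q := by
    intro c j k hjk h
    induction hjk with
    | refl => exact h
    | step _ ih => exact hmono _ _ ih
  refine ch_ind (p := fun c => ∃ j, f j c ∈ Sp q) c ⟨0, by rw [map_zero]; exact zero_mem _⟩ h ?_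
  rintro a b ⟨j, hj⟩ ⟨k, hk⟩
  refine ⟨max j k, ?_⟩
  rw [map_add]
  exact add_mem (hm _ _ _ (le_max_left _ _) hj) (hm _ _ _ (le_max_right _ _) hk)

end SklProof


namespace SklProof
open Simplicial Opposite

/-! ## Singular simplices -/

/-- The topological simplex -/
abbrev Dl (n : ℕ) : Type := stdSimplex ℝ (Fin (n+1))

/-- The singular set -/
noncomputable abbrev Sg (X : Type) [TopologicalSpace X] : SSet.{0} := TopCat.toSSet.obj (TopCat.of X)

section
variable {X Y : Type} [TopologicalSpace X] [TopologicalSpace Y]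

/-- Continuous maps as singular simplices. -/
noncomputable def sx {n : ℕ} : C(Dl n, X) ≃ (Sg X) _⦋n⦌ :=
  (TopCat.toSSetObjEquiv (TopCat.of X) (op ⦋n⦌)).symm

/-- face / degeneracy maps of topological simplices -/
noncomputable def dmap {p n : ℕ} (θ : ⦋p⦌ ⟶ ⦋n⦌) : C(Dl p, Dl n) :=
  ⟨stdSimplex.map θ.toOrderHom, stdSimplex.continuous_map _⟩

lemma sx_map {p n : ℕ} (θ : ⦋p⦌ ⟶ ⦋n⦌) (f : C(Dl n, X)) :
    (Sg X).map θ.op (sx f) = sx (f.comp (dmap θ)) := rfl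

/-- singular maps -/
noncomputable def Sgm (g : C(X, Y)) : Sg X ⟶ Sg Y := TopCat.toSSet.map (TopCat.ofHom g)

lemma Sgm_sx (g : C(X, Y)) {n : ℕ} (f : C(Dl n, X)) :
    (Sgm g).app (op ⦋n⦌) (sx f) = sx (g.comp f) := rfl

/-- affine simplex -/
noncomputable def aff {m n : ℕ} (v : Fin (n+1) → Dl m) : C(Dl n, Dl m) where
  toFun t := ⟨∑ i, (t i) • (v i).1, by
    apply (convex_stdSimplex ℝ (Fin (m+1))).sum_mem
    · intro i _; exact t.2.1 i
    · exact t.2.2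
    · intro i _; exact (v i).2⟩
  continuous_toFun := by
    refine Continuous.subtype_mk ?_ _
    refine continuous_finsetSum _ fun i _ => ?_
    refine Continuous.smul (M := ℝ) ?_ continuous_const
    have : Continuous (fun t : Dl n => t.1 i) :=
      (continuous_apply i).comp continuous_subtype_val
    exact this

lemma aff_coe {m n : ℕ} (v : Fin (n+1) → Dl m) (t : Dl n) :
    ((aff v t : Dl m) : Fin (m+1) → ℝ) = ∑ i, (t i) • (v i).1 := rfl

lemma aff_apply {m n : ℕ} (v : Fin (n+1) → Dl m) (t : Dl n) (j : Fin (m+1)) :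
    (aff v t) j = ∑ i, (t i) * (v i) j := by
  have := congrFun (aff_coe v t) j
  refine this.trans ?_
  rw [Finset.sum_apply]; rfl

lemma aff_aff {m n p : ℕ} (u : Fin (m+1) → Dl p) (v : Fin (n+1) → Dl m) :
    (aff u).comp (aff v) = aff (aff u ∘ v) := by
  refine ContinuousMap.ext fun t => ?_
  apply stdSimplex.ext
  funext j
  change (aff u (aff v t)) j = (aff (aff u ∘ v) t) j
  rw [aff_apply, aff_apply]
  simp only [aff_apply, Function.comp, Finset.sum_mul, Finset.mul_sum]
  rw [Finset.sum_comm]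
  simp only [mul_assoc]

lemma aff_dmap {p n m : ℕ} (v : Fin (n+1) → Dl m) (θ : ⦋p⦌ ⟶ ⦋n⦌) :
    (aff v).comp (dmap θ) = aff (v ∘ θ.toOrderHom) := by
  refine ContinuousMap.ext fun t => ?_
  apply stdSimplex.ext
  funext j
  change (aff v (stdSimplex.map θ.toOrderHom t)) j = (aff (v ∘ θ.toOrderHom) t) j
  rw [aff_apply, aff_apply]
  have : ∀ i, (stdSimplex.map θ.toOrderHom t) i =
      ∑ k, if θ.toOrderHom k = i then t k else 0 := by
    intro i
    have h := congrFun (stdSimplex.map_coe θ.toOrderHom t) i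
    refine h.trans ?_
    rw [FunOnFinite.linearMap_apply_apply]
    rw [Finset.sum_filter]
  simp only [this, Finset.sum_mul]
  rw [Finset.sum_comm]
  refine Finset.sum_congr rfl fun k _ => ?_
  simp [ite_mul]

/-- the vertices -/
noncomputable def ev (n : ℕ) : Fin (n+1) → Dl n := fun i => stdSimplex.vertex i

lemma aff_ev (n : ℕ) : aff (ev n) = ContinuousMap.id _ := by
  refine ContinuousMap.ext fun t => ?_
  apply stdSimplex.ext
  funext j
  change (aff (ev n) t) j = t j
  rw [aff_apply]
  have : ∀ i, (ev n i) j = (if j = i then (1 : ℝ) else 0) := by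
    intro i
    have h := congrFun (stdSimplex.vertex_coe (S := ℝ) i) j
    refine h.trans ?_
    simp [Pi.single_apply]
  simp [this]

lemma aff_comp_ev {n m : ℕ} (v : Fin (n+1) → Dl m) : aff v ∘ ev n = v := by
  funext i
  apply stdSimplex.ext
  funext j
  change (aff v (ev n i)) j = v i j
  rw [aff_apply]
  have : ∀ k, (ev n i) k = (if k = i then (1 : ℝ) else 0) := by
    intro k
    have h := congrFun (stdSimplex.vertex_coe (S := ℝ) i) k
    refine h.trans ?_
    simp [Pi.single_apply]
  simp [this]

/-- barycenter of a tuple -/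
noncomputable def bary (m n : ℕ) (v : Fin (n+1) → Dl m) : Dl m := aff v stdSimplex.barycenter

lemma bary_aff {p m n : ℕ} (u : Fin (m+1) → Dl p) (v : Fin (n+1) → Dl m) :
    bary p n (aff u ∘ v) = aff u (bary m n v) := by
  unfold bary
  rw [← aff_aff]; rfl

lemma sx_aff_nat {m p n : ℕ} (f : C(Dl m, X)) (θ : ⦋p⦌ ⟶ ⦋n⦌) (v : Fin (n+1) → Dl m) :
    sx (f.comp (aff (v ∘ θ.toOrderHom))) = (Sg X).map θ.op (sx (f.comp (aff v))) := by
  rw [sx_map, ContinuousMap.comp_assoc, aff_dmap]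

/-- The affine-tuples-to-singular-simplices map. -/
noncomputable def Tsg {m : ℕ} (f : C(Dl m, X)) : TT (Dl m) ⟶ Sg X where
  app n := ↾(fun v => sx (n := n.unop.len) (f.comp (aff v)))
  naturality n p θ := by
    obtain ⟨n⟩ := n
    obtain ⟨p⟩ := p
    induction n using SimplexCategory.rec with | _ n
    induction p using SimplexCategory.rec with | _ p
    apply ConcreteCategory.hom_ext
    intro v
    exact sx_aff_nat f θ.unop v

lemma Tsg_tp {m n : ℕ} (f : C(Dl m, X)) (v : Fin (n+1) → Dl m) :
    cm (Tsg f) n (bas (tp v)) = bas (sx (f.comp (aff v))) := cm_bas _ _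

lemma Tsg_comp {m p n : ℕ} (f : C(Dl m, X)) (u : Fin (p+1) → Dl m) (c : (Cs (TT (Dl p))).X n) :
    cm (Tsg (f.comp (aff u))) n c = cm (Tsg f) n (cm (TTmap (aff u)) n c) := by
  have : cm (Tsg (f.comp (aff u))) n = cm (Tsg f) n ∘ₗ cm (TTmap (aff u)) n := by
    apply tp_ext
    intro v
    change _ = cm (Tsg f) n (cm (TTmap (aff u)) n (bas (tp v)))
    rw [Tsg_tp, cm_TT, Tsg_tp, ContinuousMap.comp_assoc, aff_aff]
  exact congr($this c)

/-- subdivision operator on affine chains -/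
noncomputable abbrev sda (m n : ℕ) := sd (E := Dl m) (bary m) n
/-- homotopy operator on affine chains -/
noncomputable abbrev sTa (m n : ℕ) := sdT (E := Dl m) (bary m) n

variable (X) in
/-- subdivision operator on singular chains -/
noncomputable def Sd (n : ℕ) : (Cs (Sg X)).X n →ₗ[ZMod 2] (Cs (Sg X)).X n :=
  lin (fun s => cm (Tsg (sx.symm s)) n (sda n n (bas (tp (ev n)))))

variable (X) in
/-- homotopy operator on singular chains -/
noncomputable def ST (n : ℕ) : (Cs (Sg X)).X n →ₗ[ZMod 2] (Cs (Sg X)).X (n+1) :=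
  lin (fun s => cm (Tsg (sx.symm s)) (n+1) (sTa n n (bas (tp (ev n)))))

lemma Sd_sx {n : ℕ} (f : C(Dl n, X)) :
    Sd X n (bas (sx f)) = cm (Tsg f) n (sda n n (bas (tp (ev n)))) := by
  refine (lin_bas _ _).trans ?_
  rw [Equiv.symm_apply_apply]

lemma ST_sx {n : ℕ} (f : C(Dl n, X)) :
    ST X n (bas (sx f)) = cm (Tsg f) (n+1) (sTa n n (bas (tp (ev n)))) := by
  refine (lin_bas _ _).trans ?_
  rw [Equiv.symm_apply_apply]

lemma Sd_Tsg {m n : ℕ} (f : C(Dl m, X)) (c : (Cs (TT (Dl m))).X n) :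
    Sd X n (cm (Tsg f) n c) = cm (Tsg f) n (sda m n c) := by
  have : Sd X n ∘ₗ (cm (Tsg f) n) = cm (Tsg f) n ∘ₗ sda m n := by
    apply tp_ext
    intro v
    change Sd X n (cm (Tsg f) n (bas (tp v))) = cm (Tsg f) n (sda m n (bas (tp v)))
    rw [Tsg_tp, Sd_sx, Tsg_comp, cm_sd (bary n) (aff v) (bary m) (fun _ _ => bary_aff _ _), cm_TT,
      aff_comp_ev]
  exact congr($this c)

lemma ST_Tsg {m n : ℕ} (f : C(Dl m, X)) (c : (Cs (TT (Dl m))).X n) :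
    ST X n (cm (Tsg f) n c) = cm (Tsg f) (n+1) (sTa m n c) := by
  have : ST X n ∘ₗ (cm (Tsg f) n) = cm (Tsg f) (n+1) ∘ₗ sTa m n := by
    apply tp_ext
    intro v
    change ST X n (cm (Tsg f) n (bas (tp v))) = cm (Tsg f) (n+1) (sTa m n (bas (tp v)))
    rw [Tsg_tp, ST_sx, Tsg_comp, cm_sdT (bary n) (aff v) (bary m) (fun _ _ => bary_aff _ _), cm_TT,
      aff_comp_ev]
  exact congr($this c)

lemma sx_ext {n : ℕ} {M : Type*} [AddCommGroup M] [Module (ZMod 2) M]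
    {f g : (Cs (Sg X)).X n →ₗ[ZMod 2] M}
    (h : ∀ v : C(Dl n, X), f (bas (sx v)) = g (bas (sx v))) : f = g :=
  lin_ext (fun x => by obtain ⟨v, rfl⟩ := sx.surjective x; exact h v)

lemma bas_sx_eq {n : ℕ} (f : C(Dl n, X)) : bas (sx f) = cm (Tsg f) n (bas (tp (ev n))) := by
  rw [Tsg_tp, aff_ev]; rfl

lemma dl_Sd {n : ℕ} (c : (Cs (Sg X)).X (n+1)) : dl _ _ (Sd X (n+1) c) = Sd X n (dl _ _ c) := by
  have : dl _ _ ∘ₗ Sd X (n+1) = Sd X n ∘ₗ dl _ _ := by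
    apply sx_ext
    intro f
    change dl _ _ (Sd X (n+1) (bas (sx f))) = Sd X n (dl _ _ (bas (sx f)))
    rw [bas_sx_eq, Sd_Tsg, ← cm_dl, ← cm_dl, dl_sd, Sd_Tsg]
  exact congr($this c)

lemma dl_ST {n : ℕ} (c : (Cs (Sg X)).X (n+1)) :
    dl _ _ (ST X (n+1) c) = c + Sd X (n+1) c + ST X n (dl _ _ c) := by
  have : dl _ _ ∘ₗ ST X (n+1) = LinearMap.id + Sd X (n+1) + ST X n ∘ₗ dl _ _ := by
    apply sx_ext
    intro f
    change dl _ _ (ST X (n+1) (bas (sx f))) = bas (sx f) + Sd X (n+1) (bas (sx f))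
      + ST X n (dl _ _ (bas (sx f)))
    rw [bas_sx_eq, Sd_Tsg, ST_Tsg, ← cm_dl, ← cm_dl, ST_Tsg, dl_sdT, map_add, map_add]
  exact congr($this c)

lemma dl_ST_zero (c : (Cs (Sg X)).X 0) :
    dl _ _ (ST X 0 c) = c + Sd X 0 c := by
  have : dl _ _ ∘ₗ ST X 0 = LinearMap.id + Sd X 0 := by
    apply sx_ext
    intro f
    change dl _ _ (ST X 0 (bas (sx f))) = bas (sx f) + Sd X 0 (bas (sx f))
    rw [bas_sx_eq, Sd_Tsg, ST_Tsg, ← cm_dl, dl_sdT_zero, map_add]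
  exact congr($this c)

/-! ## mesh estimates -/

/-- simplices of `w` lie in the hull of `v` and have diameter at most `r`-/
def Fine {m n p : ℕ} (v : Fin (n+1) → Dl m) (r : ℝ) (w : (TT (Dl m)) _⦋p⦌) : Prop :=
  (∀ K : Set (Fin (m+1) → ℝ), Convex ℝ K → (∀ i, (v i).1 ∈ K) → ∀ i : Fin (p+1), (w i).1 ∈ K) ∧
  ∀ i j : Fin (p+1), dist (w i).1 (w j).1 ≤ r

lemma bary_coe (m n : ℕ) (v : Fin (n+1) → Dl m) :
    (bary m n v).1 = ∑ i, ((n+1:ℝ)⁻¹) • (v i).1 := by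
  refine (aff_coe _ _).trans ?_
  refine Finset.sum_congr rfl fun i _ => ?_
  refine congrArg (· • (v i).1) ((stdSimplex.barycenter_apply (𝕜 := ℝ) i).trans ?_)
  simp

lemma bary_mem {m n : ℕ} (v : Fin (n+1) → Dl m) (K : Set (Fin (m+1) → ℝ)) (hK : Convex ℝ K)
    (hv : ∀ i, (v i).1 ∈ K) : (bary m n v).1 ∈ K := by
  rw [bary_coe]
  refine hK.sum_mem (fun i _ => by positivity) ?_ (fun i _ => hv i)
  simp
  field_simp

lemma dist_bary {m n : ℕ} (v : Fin (n+1) → Dl m) (r : ℝ) (hr : ∀ i j, dist (v i).1 (v j).1 ≤ r)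
    (j : Fin (n+1)) : dist (v j).1 (bary m n v).1 ≤ n / (n+1) * r := by
  rw [bary_coe, dist_eq_norm]
  have h1 : (v j).1 - ∑ i, ((n+1:ℝ)⁻¹) • (v i).1 = ∑ i, ((n+1:ℝ)⁻¹) • ((v j).1 - (v i).1) := by
    simp only [smul_sub, Finset.sum_sub_distrib]
    congr 1
    rw [Finset.sum_const, Finset.card_univ, Fintype.card_fin, ← Nat.cast_smul_eq_nsmul ℝ, smul_smul]
    have : ((n+1 : ℕ) : ℝ) * ((n:ℝ)+1)⁻¹ = 1 := by push_cast; field_simp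
    rw [this, one_smul]
  rw [h1]
  rw [← Finset.sum_erase_add _ _ (Finset.mem_univ j), sub_self, smul_zero, add_zero]
  refine (norm_sum_le _ _).trans ?_
  have h2 : ∀ i ∈ Finset.univ.erase j, ‖((n+1:ℝ)⁻¹) • ((v j).1 - (v i).1)‖ ≤ (n+1:ℝ)⁻¹ * r := by
    intro i _
    rw [norm_smul, Real.norm_of_nonneg (by positivity), ← dist_eq_norm]
    exact mul_le_mul_of_nonneg_left (hr j i) (by positivity)
  refine (Finset.sum_le_sum h2).trans ?_
  rw [Finset.sum_const, Finset.card_erase_of_mem (Finset.mem_univ j), Finset.card_univ,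
    Fintype.card_fin, nsmul_eq_mul]
  simp
  apply le_of_eq
  ring

lemma sd_fine {m : ℕ} (n : ℕ) : ∀ (v : Fin (n+1) → Dl m) (r : ℝ), 0 ≤ r →
    (∀ i j, dist (v i).1 (v j).1 ≤ r) →
    sda m n (bas (tp v)) ∈ Sp (Fine v (n / (n+1) * r)) := by
  induction n with
  | zero =>
    intro v r hr h
    refine bas_mem_Sp ⟨fun K hK hv i => hv i, fun i j => ?_⟩
    have : i = j := Subsingleton.elim (α := Fin 1) i j
    rw [this, dist_self]
    simp
  | succ n ih =>
    intro v r hr h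
    rw [sd_succ, dl_tp, map_sum, map_sum]
    refine sum_mem fun i _ => ?_
    refine Sp_map (cone _ n) ?_ (ih (fun j => v (i.succAbove j)) r hr fun _ _ => h _ _)
    rintro w ⟨hw1, hw2⟩
    refine (congrArg (· ∈ Sp _) (cone_bas _ w)).mpr ?_
    have hle : (n:ℝ) / (n+1) * r ≤ ((n+1 : ℕ) : ℝ) / ((n+1 : ℕ) + 1) * r := by
      apply mul_le_mul_of_nonneg_right _ hr
      rw [div_le_div_iff₀ (by positivity) (by positivity)]
      push_cast
      nlinarith
    have hpos : (0:ℝ) ≤ ((n+1 : ℕ) : ℝ) / ((n+1 : ℕ) + 1) * r := by positivity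
    have hb : ∀ j : Fin (n+1), dist (w j).1 (bary m (n+1) v).1 ≤
        ((n+1 : ℕ) : ℝ) / ((n+1 : ℕ) + 1) * r := by
      intro j
      have := hw1 (Metric.closedBall (bary m (n+1) v).1 (((n+1 : ℕ) : ℝ) / ((n+1 : ℕ) + 1) * r))
        (convex_closedBall _ _) (fun i' => by
          rw [Metric.mem_closedBall]
          exact dist_bary v r h _) j
      exact this
    refine bas_mem_Sp ⟨fun K hK hv j => ?_, fun j k => ?_⟩
    · refine Fin.cases ?_ (fun j => ?_) j
      · exact bary_mem v K hK hv
      · exact hw1 K hK (fun i' => hv _) j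
    · refine Fin.cases ?_ (fun j => ?_) j <;> refine Fin.cases ?_ (fun k => ?_) k
      · exact (dist_self _).trans_le hpos
      · exact (dist_comm _ _).trans_le (hb k)
      · exact hb j
      · exact (hw2 j k).trans hle

end
end SklProof


namespace SklProof
open Simplicial Opposite

/-! ## Small simplices -/
section
variable {X Y : Type} [TopologicalSpace X] [TopologicalSpace Y]

lemma sd_iter_small (m j : ℕ) :
    ((sda m m)^[j]) (bas (tp (ev m))) ∈
      Sp (fun w : (TT (Dl m)) _⦋m⦌ =>
        ∀ i k : Fin (m+1), dist (w i).1 (w k).1 ≤ ((m:ℝ) / (m+1))^j) := by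
  induction j with
  | zero =>
    refine bas_mem_Sp ?_
    intro i k
    rw [pow_zero]
    refine (Metric.dist_le_diam_of_mem (bounded_stdSimplex _) (Subtype.prop _)
      (Subtype.prop _)).trans diam_stdSimplex_le
  | succ j ih =>
    rw [Function.iterate_succ_apply']
    refine Sp_map (sda m m) ?_ ih
    intro w hw
    have := sd_fine (m := m) m w (((m:ℝ) / (m+1))^j) (by positivity) hw
    refine Sp_mono ?_ this
    intro w' hw' i k
    rw [pow_succ']
    exact hw'.2 i k

lemma cm_Tsg_mem {m n : ℕ} (f : C(Dl m, X)) (q : (Sg X) _⦋n⦌ → Prop)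
    (h : ∀ g : C(Dl n, Dl m), q (sx (f.comp g))) (c : (Cs (TT (Dl m))).X n) :
    cm (Tsg f) n c ∈ Sp q := by
  refine ch_ind (p := fun c => cm (Tsg f) n c ∈ Sp q) c (by rw [map_zero]; exact zero_mem _) ?_ ?_
  · intro x
    refine (congrArg (· ∈ Sp q) (Tsg_tp f x)).mpr (bas_mem_Sp (h _))
  · intro a b ha hb
    rw [map_add]
    exact add_mem ha hb

lemma Sd_iter_Tsg {m n : ℕ} (f : C(Dl m, X)) (c : (Cs (TT (Dl m))).X n) (j : ℕ) :
    ((Sd X n)^[j]) (cm (Tsg f) n c) = cm (Tsg f) n ((sda m n)^[j] c) := by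
  induction j with
  | zero => rfl
  | succ j ih => rw [Function.iterate_succ_apply', ih, Sd_Tsg, Function.iterate_succ_apply']

lemma exists_small {A B : Set X} (hA : IsOpen A) (hB : IsOpen B) (hAB : ∀ x, x ∈ A ∨ x ∈ B)
    {m : ℕ} (f : C(Dl m, X)) (q : (Sg X) _⦋m⦌ → Prop)
    (hq : ∀ g : C(Dl m, X), ((∀ t, g t ∈ A) ∨ (∀ t, g t ∈ B)) → q (sx g)) :
    ∃ j, ((Sd X m)^[j]) (bas (sx f)) ∈ Sp q := by
  obtain ⟨δ, hδ, hball⟩ := lebesgue_number_lemma_of_metric (s := (Set.univ : Set (Dl m)))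
    (ι := Bool) (c := fun b => f ⁻¹' (bif b then A else B)) isCompact_univ
    (fun b => by cases b; exacts [hB.preimage f.continuous, hA.preimage f.continuous])
    (fun x _ => by
      rw [Set.mem_iUnion]
      rcases hAB (f x) with h | h
      · exact ⟨true, h⟩
      · exact ⟨false, h⟩)
  have hlt : (m:ℝ) / (m+1) < 1 := by
    rw [div_lt_one (by positivity)]; linarith
  obtain ⟨j, hj⟩ := exists_pow_lt_of_lt_one hδ hlt
  refine ⟨j, ?_⟩
  rw [bas_sx_eq, Sd_iter_Tsg]
  refine Sp_map (cm (Tsg f) m) ?_ (sd_iter_small m j)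
  intro w hw
  refine (congrArg (· ∈ Sp q) (Tsg_tp f w)).mpr (bas_mem_Sp (hq _ ?_))
  obtain ⟨b, hb⟩ := hball (w (0 : Fin (m+1))) (Set.mem_univ _)
  have key : ∀ t, aff (m := m) (n := m) w t ∈ f ⁻¹' (bif b then A else B) := by
    intro t
    apply hb
    rw [Metric.mem_ball]
    refine lt_of_le_of_lt ?_ hj
    have hc : Convex ℝ (Metric.closedBall ((w (0 : Fin (m+1))).1) (((m:ℝ) / (m+1))^j)) :=
      convex_closedBall _ _
    have : (aff (m := m) (n := m) w t).1 ∈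
        Metric.closedBall ((w (0 : Fin (m+1))).1) (((m:ℝ) / (m+1))^j) := by
      refine (congrArg (· ∈ Metric.closedBall _ _) (aff_coe (m := m) (n := m) w t)).mpr ?_
      exact hc.sum_mem (fun i _ => t.2.1 i) t.2.2 (fun i _ => hw i 0)
    exact this
  cases b
  · right; exact key
  · left; exact key

/-- Main formal argument for small simplices. -/
lemma small_bij (S : (Sg X).Subcomplex)
    (h1 : ∀ (n m : ℕ) (f : C(Dl n, X)) (g : C(Dl m, Dl n)), sx f ∈ S.obj (op ⦋n⦌) →
      sx (f.comp g) ∈ S.obj (op ⦋m⦌))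
    (h2 : ∀ (n : ℕ) (f : C(Dl n, X)), ∃ j,
      ((Sd X n)^[j]) (bas (sx f)) ∈ Sp (fun s => s ∈ S.obj (op ⦋n⦌)))
    (n : ℕ) : Function.Bijective (Hm (CsF.map S.ι) n) := by
  let Q : ∀ n, Submodule (ZMod 2) ((Cs (Sg X)).X n) := fun n => Sp (fun s => s ∈ S.obj (op ⦋n⦌))
  have hSd : ∀ n c, c ∈ Q n → Sd X n c ∈ Q n := by
    intro n c hc
    refine Sp_map (Sd X n) ?_ hc
    intro s hs
    obtain ⟨f, rfl⟩ := sx.surjective s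
    rw [Sd_sx]
    exact cm_Tsg_mem f _ (fun g => h1 _ _ f g hs) _
  have hST : ∀ n c, c ∈ Q n → ST X n c ∈ Q (n+1) := by
    intro n c hc
    refine Sp_map (ST X n) ?_ hc
    intro s hs
    obtain ⟨f, rfl⟩ := sx.surjective s
    rw [ST_sx]
    exact cm_Tsg_mem f _ (fun g => h1 _ _ f g hs) _
  have hj : ∀ n c, ∃ j, ((Sd X n)^[j]) c ∈ Q n := by
    intro n c
    have e : ∀ j c, ((Sd X n) ^ j) c = ((Sd X n)^[j]) c := fun j c => by
      rw [Module.End.pow_apply]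
    obtain ⟨j, hj⟩ := Sp_exists (X := Sg X) (n := n) (fun j => (Sd X n) ^ j)
      (fun s => s ∈ S.obj (op ⦋n⦌)) (fun j c h => by
        rw [e] at h ⊢
        rw [Function.iterate_succ_apply']
        exact hSd n _ h) (fun x => by
          obtain ⟨f, rfl⟩ := sx.surjective x
          obtain ⟨j, hj⟩ := h2 n f
          exact ⟨j, by rw [e]; exact hj⟩) c
    exact ⟨j, by rw [← e]; exact hj⟩
  have hz : ∀ n (z : (Cs (Sg X)).X n), ((Cs (Sg X)).d n (nx n)).hom z = 0 →
      ((Cs (Sg X)).d n (nx n)).hom (Sd X n z) = 0 ∧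
        dl (Sg X) n (ST X n z) = z + Sd X n z := by
    intro n z hz
    rcases n with _ | n
    · refine ⟨?_, dl_ST_zero z⟩
      rw [(Cs (Sg X)).shape _ _ (by rw [nx_zero]; simp)]
      rfl
    · have hn := nx_succ n
      revert hz
      generalize nx (n+1) = k at hn
      subst hn
      intro hz
      have hz' : dl (Sg X) k z = 0 := hz
      refine ⟨?_, ?_⟩
      · change dl (Sg X) k (Sd X (k+1) z) = 0
        rw [dl_Sd, hz', map_zero]
      · rw [dl_ST, hz', map_zero, add_zero]
  have hit : ∀ n (j : ℕ) (z : (Cs (Sg X)).X n), ((Cs (Sg X)).d n (nx n)).hom z = 0 →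
      ((Cs (Sg X)).d n (nx n)).hom ((Sd X n)^[j] z) = 0 ∧
      ∃ h, dl (Sg X) n h = z + (Sd X n)^[j] z ∧ (z ∈ Q n → h ∈ Q (n+1)) := by
    intro n j
    induction j with
    | zero =>
      intro z hz0
      refine ⟨hz0, 0, ?_, fun _ => zero_mem _⟩
      rw [map_zero]
      exact (add_self_mod2 z).symm
    | succ j ih =>
      intro z hz0
      obtain ⟨ha, hb⟩ := hz n z hz0
      obtain ⟨hc, h, hd, he⟩ := ih _ ha
      rw [Function.iterate_succ_apply]
      refine ⟨hc, h + ST X n z, ?_, fun hq => add_mem (he (hSd _ _ hq)) (hST _ _ hq)⟩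
      rw [map_add, hb, hd]
      generalize Sd X n z = a
      generalize (Sd X n)^[j] a = b
      rw [add_comm a b, add_add_add_comm, add_self_mod2 a, add_zero, add_comm]
  have hinj : ∀ n, Function.Injective ((CsF.map S.ι).f n).hom := by
    intro n
    exact Finsupp.mapDomain_injective Subtype.val_injective
  have hran : ∀ n c, c ∈ Q n → ∃ y, ((CsF.map S.ι).f n).hom y = c := by
    intro n c hc
    have : Q n ≤ LinearMap.range ((CsF.map S.ι).f n).hom := by
      refine Submodule.span_le.2 ?_
      rintro _ ⟨s, hs, rfl⟩
      exact ⟨bas (X := S.toSSet) ⟨s, hs⟩, map_bas S.ι _⟩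
    exact this hc
  have hran' : ∀ n y, ((CsF.map S.ι).f n).hom y ∈ Q n := by
    intro n y
    refine ch_ind (p := fun y => ((CsF.map S.ι).f n).hom y ∈ Q n) y
      (by rw [map_zero]; exact zero_mem _) ?_ ?_
    · intro s
      refine (congrArg (· ∈ Q n) (map_bas S.ι s)).mpr (bas_mem_Sp s.2)
    · intro a b ha hb
      rw [map_add]; exact add_mem ha hb
  have hcomm : ∀ i j y, ((CsF.map S.ι).f j).hom (((Cs S.toSSet).d i j).hom y) =
      ((Cs (Sg X)).d i j).hom (((CsF.map S.ι).f i).hom y) := by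
    intro i j y
    exact (congr($((CsF.map S.ι).comm i j) y)).symm
  constructor
  · rw [injective_iff_map_eq_zero]
    intro x hx
    obtain ⟨⟨z, hz0⟩, rfl⟩ := cls_surj n x
    have hz1 : ((Cs (Sg X)).d n (nx n)).hom (((CsF.map S.ι).f n).hom z) = 0 := by
      rw [← hcomm, LinearMap.mem_ker.1 hz0, map_zero]
    have hx2 : Hm (CsF.map S.ι) n (cls _ n ⟨z, hz0⟩) =
        cls _ n ⟨((CsF.map S.ι).f n).hom z, LinearMap.mem_ker.2 hz1⟩ := cls_map _ _ _ _ rfl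
    rw [hx2, cls_eq_zero] at hx
    obtain ⟨y, hy⟩ := hx
    have hy' : dl (Sg X) n y = ((CsF.map S.ι).f n).hom z := hy
    obtain ⟨j, hjy⟩ := hj (n+1) y
    obtain ⟨-, h, hd, hq⟩ := hit n j _ hz1
    have hdj : dl (Sg X) n ((Sd X (n+1))^[j] y) = (Sd X n)^[j] (dl (Sg X) n y) := by
      clear hjy hd
      induction j with
      | zero => rfl
      | succ j ih =>
        rw [Function.iterate_succ_apply', dl_Sd, ih, Function.iterate_succ_apply']
    obtain ⟨y', hy2⟩ := hran (n+1) _ (add_mem (hq (hran' n z)) hjy)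
    rw [cls_eq_zero]
    refine ⟨y', hinj n ?_⟩
    rw [hcomm, hy2]
    change dl (Sg X) n _ = _
    rw [map_add, hdj, hd, hy']
    generalize (Sd X n)^[j] _ = b
    rw [add_assoc, add_self_mod2 b, add_zero]
  · intro x
    obtain ⟨⟨z, hz0⟩, rfl⟩ := cls_surj n x
    obtain ⟨j, hjz⟩ := hj n z
    obtain ⟨hc, h, hd, -⟩ := hit n j z hz0
    obtain ⟨y, hy⟩ := hran n _ hjz
    have hy0 : ((Cs S.toSSet).d n (nx n)).hom y = 0 := by
      apply hinj
      rw [hcomm, hy, hc, map_zero]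
    refine ⟨cls _ n ⟨y, LinearMap.mem_ker.2 hy0⟩, ?_⟩
    have e : Hm (CsF.map S.ι) n (cls _ n ⟨y, LinearMap.mem_ker.2 hy0⟩) =
      cls _ n ⟨(Sd X n)^[j] z, LinearMap.mem_ker.2 hc⟩ := cls_map _ _ _ _ hy.symm
    rw [e]
    apply eq_of_add_mod2
    rw [← map_add, cls_eq_zero]
    exact ⟨h, hd.trans (add_comm _ _)⟩

lemma lift_emb {f : C(X, Y)} (hf : Topology.IsEmbedding f) {n : ℕ} (s : C(Dl n, Y))
    (h : ∀ t, s t ∈ Set.range f) : ∃ s' : C(Dl n, X), f.comp s' = s := by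
  choose g hg using h
  refine ⟨⟨g, ?_⟩, ContinuousMap.ext hg⟩
  rw [hf.continuous_iff]
  have : f ∘ g = s := funext hg
  rw [this]; exact s.continuous

lemma Sgm_inj {f : C(X, Y)} (hf : Function.Injective f) (n : ℕ) :
    Function.Injective ((Sgm f).app (op ⦋n⦌)) := by
  intro s t hst
  obtain ⟨s, rfl⟩ := sx.surjective s
  obtain ⟨t, rfl⟩ := sx.surjective t
  have h : f.comp s = f.comp t := sx.injective hst
  congr 1
  ext x
  exact hf (congr($h x))

lemma Sgm_comp {Z : Type} [TopologicalSpace Z] (f : C(X, Y)) (g : C(Y, Z)) :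
    Sgm (g.comp f) = Sgm f ≫ Sgm g := by
  unfold Sgm
  rw [← TopCat.toSSet.map_comp]; rfl

lemma Sgm_id : Sgm (ContinuousMap.id X) = 𝟙 _ := by
  unfold Sgm
  exact TopCat.toSSet.map_id _

end

/-- singular chain map -/
noncomputable abbrev Cm {X Y : Type} [TopologicalSpace X] [TopologicalSpace Y] (f : C(X, Y)) :=
  CsF.map (Sgm f)

/-- topological Mayer-Vietoris -/
theorem MV_top {P U V W : Type} [TopologicalSpace P] [TopologicalSpace U] [TopologicalSpace V]
    [TopologicalSpace W] (a : C(P, U)) (b : C(P, V)) (i : C(U, W)) (j : C(V, W))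
    (sq : i.comp a = j.comp b) (ha : Topology.IsEmbedding a)
    (hi : Topology.IsOpenEmbedding i) (hj : Topology.IsOpenEmbedding j)
    (hcov : ∀ w, w ∈ Set.range i ∨ w ∈ Set.range j)
    (hex : ∀ u v, i u = j v → ∃ p, a p = u) :
    MV (Cm a) (Cm b) (Cm i) (Cm j) := by
  let S : (Sg W).Subcomplex := SSet.Subcomplex.range (Sgm i) ⊔ SSet.Subcomplex.range (Sgm j)
  have hS : ∀ n s, s ∈ S.obj (op ⦋n⦌) ↔
      (∃ u, (Sgm i).app (op ⦋n⦌) u = s) ∨ (∃ v, (Sgm j).app (op ⦋n⦌) v = s) := by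
    intro n s; rfl
  have hle1 : SSet.Subcomplex.range (Sgm i) ≤ S := le_sup_left
  have hle2 : SSet.Subcomplex.range (Sgm j) ≤ S := le_sup_right
  let i' : Sg U ⟶ S.toSSet := SSet.Subcomplex.lift (Sgm i) hle1
  let j' : Sg V ⟶ S.toSSet := SSet.Subcomplex.lift (Sgm j) hle2
  have hi' : i' ≫ S.ι = Sgm i := rfl
  have hj' : j' ≫ S.ι = Sgm j := rfl
  have hbij : ∀ n, Function.Bijective (Hm (CsF.map S.ι) n) := by
    apply small_bij
    · intro n m f g hf
      rw [hS] at hf ⊢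
      rcases hf with ⟨u, hu⟩ | ⟨u, hu⟩
      · obtain ⟨u, rfl⟩ := sx.surjective u
        left
        refine ⟨sx (u.comp g), ?_⟩
        have : i.comp u = f := sx.injective hu
        rw [← this]; rfl
      · obtain ⟨u, rfl⟩ := sx.surjective u
        right
        refine ⟨sx (u.comp g), ?_⟩
        have : j.comp u = f := sx.injective hu
        rw [← this]; rfl
    · intro n f
      refine exists_small hi.isOpen_range hj.isOpen_range hcov f _ ?_
      intro g hg
      rw [hS]
      rcases hg with h | h
      · obtain ⟨s', rfl⟩ := lift_emb hi.isEmbedding g h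
        exact Or.inl ⟨sx s', rfl⟩
      · obtain ⟨s', rfl⟩ := lift_emb hj.isEmbedding g h
        exact Or.inr ⟨sx s', rfl⟩
  have key : MV (CsF.map (Sgm a)) (CsF.map (Sgm b)) (CsF.map i') (CsF.map j') := by
    apply MV_SSet
    · have : (Sgm a ≫ i') ≫ S.ι = (Sgm b ≫ j') ≫ S.ι := by
        rw [Category.assoc, Category.assoc, hi', hj', ← Sgm_comp, ← Sgm_comp, sq]
      exact (cancel_mono S.ι).1 this
    · exact fun n => Sgm_inj ha.injective n
    · intro n x y hxy
      exact Sgm_inj hi.injective n (congrArg Subtype.val hxy)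
    · intro n x y hxy
      exact Sgm_inj hj.injective n (congrArg Subtype.val hxy)
    · rintro n ⟨s, hs⟩
      rcases (hS n s).1 hs with ⟨u, hu⟩ | ⟨u, hu⟩
      · exact Or.inl ⟨u, Subtype.ext hu⟩
      · exact Or.inr ⟨u, Subtype.ext hu⟩
    · intro n u v huv
      obtain ⟨u, rfl⟩ := sx.surjective u
      obtain ⟨v, rfl⟩ := sx.surjective v
      have h : i.comp u = j.comp v := sx.injective (congrArg Subtype.val huv)
      obtain ⟨s', rfl⟩ := lift_emb ha u (fun t => hex (u t) (v t) (congr($h t)))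
      exact ⟨sx s', rfl⟩
  have := MV_of_bij key (CsF.map S.ι) hbij
  rw [← CsF.map_comp, ← CsF.map_comp, hi', hj'] at this
  exact this

end SklProof


namespace SklProof
open Simplicial Opposite

/-! ## Homotopy invariance -/
section
variable {X Y Z : Type} [TopologicalSpace X] [TopologicalSpace Y] [TopologicalSpace Z]

/-- Singular homology with `ℤ/2` coefficients. -/
noncomputable abbrev HH (X : Type) [TopologicalSpace X] (n : ℕ) : Type :=
  ((Cs (Sg X)).homology n : ModuleCat.{0} (ZMod 2))

/-- The induced map on singular homology. -/
noncomputable def Hs (f : C(X, Y)) (n : ℕ) : HH X n →ₗ[ZMod 2] HH Y n := Hm (Cm f) n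

lemma Cm_comp (f : C(X, Y)) (g : C(Y, Z)) : Cm (g.comp f) = Cm f ≫ Cm g := by
  unfold Cm; rw [Sgm_comp, CsF.map_comp]

lemma Cm_id : Cm (ContinuousMap.id X) = 𝟙 _ := by
  unfold Cm; rw [Sgm_id, CsF.map_id]

lemma Hs_comp (f : C(X, Y)) (g : C(Y, Z)) (n : ℕ) : Hs (g.comp f) n = Hs g n ∘ₗ Hs f n := by
  unfold Hs; rw [Cm_comp, Hm_comp]

lemma Hs_id (n : ℕ) : Hs (ContinuousMap.id X) n = LinearMap.id := by
  unfold Hs; rw [Cm_id, Hm_id]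

lemma Hs_homotopic {f g : C(X, Y)} (h : f.Homotopic g) (n : ℕ) : Hs f n = Hs g n := by
  obtain ⟨h⟩ := h
  have h' : TopCat.Homotopy (TopCat.ofHom f) (TopCat.ofHom g) := h
  have := homologyMap_eq_of_homotopy (TopCat.Homotopy.toSSet h') n
  unfold Hs Hm
  exact congrArg ModuleCat.Hom.hom this

/-- Homotopy equivalences induce isomorphisms. -/
noncomputable def Heq (e : ContinuousMap.HomotopyEquiv X Y) (n : ℕ) : HH X n ≃ₗ[ZMod 2] HH Y n :=
  LinearEquiv.ofLinearMap (Hs e.toFun n) (Hs e.invFun n)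
    (by rw [← Hs_comp, Hs_homotopic e.right_inv, Hs_id])
    (by rw [← Hs_comp, Hs_homotopic e.left_inv, Hs_id])

lemma Heq_apply (e : ContinuousMap.HomotopyEquiv X Y) (n : ℕ) (x) :
    Heq e n x = Hs e.toFun n x := rfl

/-- Betti numbers of a type. -/
noncomputable def bt (X : Type) [TopologicalSpace X] (n : ℕ) : ℕ := Module.finrank (ZMod 2) (HH X n)

lemma bt_eq (e : ContinuousMap.HomotopyEquiv X Y) (n : ℕ) : bt X n = bt Y n :=
  (Heq e n).finrank_eq

lemma fin_of_eq (e : ContinuousMap.HomotopyEquiv X Y) (n : ℕ) [Module.Finite (ZMod 2) (HH Y n)] :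
    Module.Finite (ZMod 2) (HH X n) :=
  Module.Finite.equiv (Heq e n).symm

end
end SklProof


namespace SklProof
open Simplicial Opposite

/-! ## The transfer sequence of a double covering -/
section transfer
variable {A B : SSet.{0}} (p : A ⟶ B) (t : A ⟶ A)

/-- The data of a free double covering of simplicial sets. -/
structure DC (p : A ⟶ B) (t : A ⟶ A) : Prop where
  inv : ∀ (n : ℕ) (x : A _⦋n⦌), p.app (op ⦋n⦌) (t.app (op ⦋n⦌) x) = p.app (op ⦋n⦌) x
  surj : ∀ (n : ℕ) (s : B _⦋n⦌), ∃ x, p.app (op ⦋n⦌) x = s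
  free : ∀ (n : ℕ) (x : A _⦋n⦌), t.app (op ⦋n⦌) x ≠ x
  fib : ∀ (n : ℕ) (x y : A _⦋n⦌), p.app (op ⦋n⦌) x = p.app (op ⦋n⦌) y →
    y = x ∨ y = t.app (op ⦋n⦌) x

variable {p t}

lemma DC.tt (h : DC p t) (n : ℕ) (x : A _⦋n⦌) :
    t.app (op ⦋n⦌) (t.app (op ⦋n⦌) x) = x := by
  rcases h.fib n x (t.app (op ⦋n⦌) (t.app (op ⦋n⦌) x)) (by rw [h.inv, h.inv]) with e | e
  · exact e
  · exact absurd e (h.free n _)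

/-- A chosen lift. -/
noncomputable def DC.lift (h : DC p t) (n : ℕ) (s : B _⦋n⦌) : A _⦋n⦌ := (h.surj n s).choose

lemma DC.lift_spec (h : DC p t) (n : ℕ) (s : B _⦋n⦌) : p.app (op ⦋n⦌) (h.lift n s) = s :=
  (h.surj n s).choose_spec

/-- The transfer. -/
noncomputable def DC.tr (h : DC p t) (n : ℕ) : (Cs B).X n →ₗ[ZMod 2] (Cs A).X n :=
  lin (fun s => bas (h.lift n s) + bas (t.app (op ⦋n⦌) (h.lift n s)))

/-- The section. -/
noncomputable def DC.sec (h : DC p t) (n : ℕ) : (Cs B).X n →ₗ[ZMod 2] (Cs A).X n :=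
  lin (fun s => bas (h.lift n s))

open Classical in
/-- The retraction. -/
noncomputable def DC.ret (h : DC p t) (n : ℕ) : (Cs A).X n →ₗ[ZMod 2] (Cs B).X n :=
  lin (fun x => if x = h.lift n (p.app (op ⦋n⦌) x) then 0 else bas (p.app (op ⦋n⦌) x))

lemma DC.tr_bas (h : DC p t) (n : ℕ) (x : A _⦋n⦌) :
    h.tr n (bas (p.app (op ⦋n⦌) x)) = bas x + bas (t.app (op ⦋n⦌) x) := by
  refine (lin_bas _ _).trans ?_
  rcases h.fib n x _ (h.lift_spec n (p.app (op ⦋n⦌) x)).symm with e | e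
  · rw [e]
  · rw [e, h.tt, add_comm]

lemma bas_ext {X : SSet.{0}} {n : ℕ} {M : Type*} [AddCommMonoid M] [Module (ZMod 2) M]
    {f g : (Cs X).X n →ₗ[ZMod 2] M} (h : ∀ x, f (bas x) = g (bas x)) (c) : f c = g c :=
  congr($(lin_ext h) c)

lemma DC.tr_d (h : DC p t) (n : ℕ) (c : (Cs B).X (n+1)) :
    h.tr n (dl B n c) = dl A n (h.tr (n+1) c) := by
  refine bas_ext (f := h.tr n ∘ₗ dl B n) (g := dl A n ∘ₗ h.tr (n+1)) (fun s => ?_) c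
  obtain ⟨x, rfl⟩ := h.surj _ s
  change h.tr n (dl B n (bas _)) = dl A n (h.tr (n+1) (bas _))
  rw [h.tr_bas, map_add, dl_bas, dl_bas, dl_bas, map_sum, ← Finset.sum_add_distrib]
  refine Finset.sum_congr rfl fun i _ => ?_
  have e1 : B.δ i (p.app (op ⦋n+1⦌) x) = p.app (op ⦋n⦌) (A.δ i x) :=
    (SSet.δ_naturality_apply p i x).symm
  have e2 : A.δ i (t.app (op ⦋n+1⦌) x) = t.app (op ⦋n⦌) (A.δ i x) :=
    (SSet.δ_naturality_apply t i x).symm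
  rw [e1, e2, h.tr_bas]

/-- The transfer chain map. -/
noncomputable def DC.trCx (h : DC p t) : Cs B ⟶ Cs A where
  f n := ModuleCat.ofHom (h.tr n)
  comm' i j hij := by
    obtain rfl : j + 1 = i := hij
    apply ModuleCat.hom_ext
    refine LinearMap.ext fun c => ?_
    exact (h.tr_d j c).symm

lemma DC.p_tr (h : DC p t) (n : ℕ) (c : (Cs B).X n) : cm p n (h.tr n c) = 0 := by
  refine bas_ext (f := cm p n ∘ₗ h.tr n) (g := 0) (fun s => ?_) c
  obtain ⟨x, rfl⟩ := h.surj _ s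
  change cm p n (h.tr n (bas _)) = 0
  rw [h.tr_bas, map_add, cm_bas, cm_bas, h.inv]
  exact add_self_mod2 _

lemma DC.p_sec (h : DC p t) (n : ℕ) (c : (Cs B).X n) : cm p n (h.sec n c) = c := by
  refine bas_ext (f := cm p n ∘ₗ h.sec n) (g := LinearMap.id) (fun s => ?_) c
  change cm p n (h.sec n (bas _)) = bas s
  refine (congrArg (cm p n) (lin_bas _ s)).trans ?_
  rw [cm_bas, h.lift_spec]

lemma DC.ret_tr (h : DC p t) (n : ℕ) (c : (Cs B).X n) : h.ret n (h.tr n c) = c := by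
  refine bas_ext (f := h.ret n ∘ₗ h.tr n) (g := LinearMap.id) (fun s => ?_) c
  change h.ret n (h.tr n (bas s)) = bas s
  refine (congrArg (h.ret n) (lin_bas _ s)).trans ?_
  rw [map_add]
  refine (congrArg₂ (· + ·) (lin_bas _ _) (lin_bas _ _)).trans ?_
  rw [h.inv, h.lift_spec]
  rw [if_pos rfl, if_neg (h.free n _), zero_add]

lemma DC.split (h : DC p t) (n : ℕ) (c : (Cs A).X n) :
    h.tr n (h.ret n c) + h.sec n (cm p n c) = c := by
  refine bas_ext (f := h.tr n ∘ₗ h.ret n + h.sec n ∘ₗ cm p n) (g := LinearMap.id) (fun x => ?_) c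
  change h.tr n (h.ret n (bas x)) + h.sec n (cm p n (bas x)) = bas x
  rw [cm_bas]
  refine (congrArg₂ (· + ·) (congrArg (h.tr n) (lin_bas _ x)) (lin_bas _ _)).trans ?_
  split_ifs with e
  · rw [map_zero, zero_add, ← e]
  · rw [h.tr_bas]
    rcases h.fib n x _ (h.lift_spec n (p.app (op ⦋n⦌) x)).symm with e' | e'
    · exact absurd e'.symm e
    · rw [e', add_assoc]
      exact (congrArg (bas x + ·) (add_self_mod2 _)).trans (add_zero _)

lemma DC.gysin (h : DC p t) :
    ∃ δ : ∀ n, (Cs B).homology (n+1) →ₗ[ZMod 2] (Cs B).homology n,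
      (∀ n, LinearMap.range (Hm h.trCx n) = LinearMap.ker (Hm (CsF.map p) n)) ∧
      (∀ n, LinearMap.range (Hm (CsF.map p) (n+1)) = LinearMap.ker (δ n)) ∧
      (∀ n, LinearMap.range (δ n) = LinearMap.ker (Hm h.trCx n)) ∧
      Function.Surjective (Hm (CsF.map p) 0) := by
  apply les
  · exact cx_hom_ext fun n c => h.p_tr n c
  · intro n
    exact Function.LeftInverse.injective (g := h.ret n) (h.ret_tr n)
  · intro n
    exact Function.RightInverse.surjective (g := h.sec n) (h.p_sec n)
  · intro n x hx
    refine ⟨h.ret n x, ?_⟩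
    have := h.split n x
    have hx' : cm p n x = 0 := hx
    rw [hx', map_zero, add_zero] at this
    exact this

end transfer

section cover
variable {E X : Type} [TopologicalSpace E] [TopologicalSpace X]

/-- straight line contraction of the simplex -/
noncomputable def ctr (n : ℕ) : C(unitInterval × Dl n, Dl n) where
  toFun q := ⟨fun i => q.1.1 * q.2.1 i + (1 - q.1.1) * (ev n 0).1 i, by
    constructor
    · intro i
      have := q.1.2.1; have h2 := q.1.2.2; have h3 := q.2.2.1 i; have h4 := (ev n 0).2.1 i
      have : 0 ≤ 1 - q.1.1 := by linarith
      positivity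
    · rw [Finset.sum_add_distrib, ← Finset.mul_sum, ← Finset.mul_sum]
      have h3 := q.2.2.2; have h4 := (ev n 0).2.2
      refine (congrArg₂ (fun a b => q.1.1 * a + (1 - q.1.1) * b) h3 h4).trans (by ring)⟩
  continuous_toFun := by
    refine Continuous.subtype_mk ?_ _
    refine continuous_pi fun i => ?_
    refine Continuous.add (Continuous.mul (by fun_prop) ?_) (Continuous.mul (by fun_prop) (by fun_prop))
    exact (continuous_apply i).comp (continuous_subtype_val.comp continuous_snd)

lemma ctr_zero (n : ℕ) (a : Dl n) : ctr n (0, a) = ev n 0 := by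
  refine Subtype.ext (funext fun i => ?_)
  change (0:ℝ) * _ + (1 - 0) * _ = _
  simp

lemma ctr_one (n : ℕ) (a : Dl n) : ctr n (1, a) = a := by
  refine Subtype.ext (funext fun i => ?_)
  change (1:ℝ) * _ + (1 - 1) * _ = _
  simp

instance (n : ℕ) : PreconnectedSpace (Dl n) := by
  refine ⟨?_⟩
  refine isPreconnected_of_forall (ev n 0) fun a _ => ?_
  refine ⟨Set.range (fun s : unitInterval => ctr n (s, a)), Set.subset_univ _, ⟨0, ctr_zero n a⟩,
    ⟨1, ctr_one n a⟩, isPreconnected_range (by fun_prop)⟩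

lemma DC_of_cover (p : C(E, X)) (τ : C(E, E)) (hc : IsCoveringMap p) (hs : Function.Surjective p)
    (hτ : ∀ e, p (τ e) = p e) (hfree : ∀ e, τ e ≠ e)
    (hfib : ∀ e e', p e = p e' → e' = e ∨ e' = τ e) : DC (Sgm p) (Sgm τ) where
  inv n x := by
    obtain ⟨f, rfl⟩ := sx.surjective x
    exact congrArg sx (a₁ := p.comp (τ.comp f)) (a₂ := p.comp f)
      (ContinuousMap.ext fun a => hτ (f a))
  surj n s := by
    obtain ⟨s, rfl⟩ := sx.surjective s
    obtain ⟨e, he⟩ := hs (s (ev n 0))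
    have h0 : ∀ a, (s.comp (ctr n)) (0, a) = p ((ContinuousMap.const (Dl n) e) a) := by
      intro a
      change s (ctr n (0, a)) = p e
      rw [ctr_zero, he]
    let F := hc.liftHomotopy (s.comp (ctr n)) (ContinuousMap.const (Dl n) e) h0
    refine ⟨sx (F.comp ⟨fun a => (1, a), by fun_prop⟩), ?_⟩
    refine congrArg sx (a₁ := p.comp (F.comp ⟨fun a => (1, a), by fun_prop⟩)) (a₂ := s)
      (ContinuousMap.ext fun a => ?_)
    have := congrFun (hc.liftHomotopy_lifts (s.comp (ctr n)) (ContinuousMap.const (Dl n) e) h0) (1, a)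
    refine Eq.trans this ?_
    change s (ctr n (1, a)) = s a
    rw [ctr_one]
  free n x hx := by
    obtain ⟨f, rfl⟩ := sx.surjective x
    have := sx.injective (a₁ := τ.comp f) (a₂ := f) hx
    exact hfree (f (ev n 0)) congr($this (ev n 0))
  fib n x y hxy := by
    obtain ⟨f, rfl⟩ := sx.surjective x
    obtain ⟨g, rfl⟩ := sx.surjective y
    have hxy : p.comp f = p.comp g := sx.injective hxy
    have h0 : p (f (ev n 0)) = p (g (ev n 0)) := congr($hxy (ev n 0))
    rcases hfib _ _ h0 with h | h
    · left
      refine congrArg sx (DFunLike.coe_injective ?_)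
      refine hc.eq_of_comp_eq g.continuous f.continuous ?_ (ev n 0) h
      exact congrArg DFunLike.coe hxy.symm
    · right
      refine congrArg sx (a₂ := τ.comp f) (DFunLike.coe_injective ?_)
      refine hc.eq_of_comp_eq g.continuous (τ.comp f).continuous ?_ (ev n 0) h
      refine funext fun a => ?_
      exact (congr($hxy.symm a)).trans (hτ _).symm

end cover
end SklProof


namespace SklProof
open Simplicial Opposite

/-! ## Quotients by a free involution -/
section quot
set_option linter.unusedSectionVars false
variable {E E' : Type} [TopologicalSpace E] [InvolutiveNeg E] [ContinuousNeg E]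
  [TopologicalSpace E'] [InvolutiveNeg E'] [ContinuousNeg E']

/-- The relation identifying `e` and `-e`. -/
def Qs (E : Type) [InvolutiveNeg E] : Setoid E where
  r a b := b = a ∨ b = -a
  iseqv := by
    constructor
    · intro a; exact Or.inl rfl
    · rintro a b (rfl | rfl)
      · exact Or.inl rfl
      · exact Or.inr (neg_neg _).symm
    · rintro a b c (rfl | rfl) (rfl | rfl)
      · exact Or.inl rfl
      · exact Or.inr rfl
      · exact Or.inr rfl
      · exact Or.inl (neg_neg _)

/-- The quotient by the involution. -/
def Q (E : Type) [InvolutiveNeg E] : Type := Quotient (Qs E)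

instance : TopologicalSpace (Q E) := inferInstanceAs (TopologicalSpace (Quotient (Qs E)))

/-- The quotient map. -/
def qm : C(E, Q E) := ⟨Quotient.mk (Qs E), continuous_quotient_mk'⟩

lemma qm_eq {a b : E} : qm a = qm b ↔ b = a ∨ b = -a := Quotient.eq (r := Qs E)

lemma qm_neg (a : E) : qm (-a) = qm a := (qm_eq.2 (Or.inr rfl)).symm

lemma qm_surj : Function.Surjective (qm : C(E, Q E)) := Quotient.mk_surjective

lemma qm_quot : Topology.IsQuotientMap (qm : C(E, Q E)) := isQuotientMap_quotient_mk'

lemma qm_open : IsOpenQuotientMap (qm : C(E, Q E)) := by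
  refine ⟨qm_surj, qm.continuous, ?_⟩
  intro U hU
  rw [← qm_quot.isOpen_preimage]
  have : (qm : C(E, Q E)) ⁻¹' (qm '' U) = U ∪ (fun x => -x) ⁻¹' U := by
    ext x
    simp only [Set.mem_preimage, Set.mem_image, Set.mem_union]
    constructor
    · rintro ⟨y, hy, h⟩
      rcases qm_eq.1 h with rfl | rfl
      · exact Or.inl hy
      · exact Or.inr (by rwa [neg_neg])
    · rintro (h | h)
      · exact ⟨x, h, rfl⟩
      · exact ⟨-x, h, qm_neg x⟩
  rw [this]
  exact hU.union (hU.preimage continuous_neg)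

/-- Continuous maps out of the quotient. -/
def qlift {Z : Type} [TopologicalSpace Z] (f : C(E, Z)) (hf : ∀ e, f (-e) = f e) : C(Q E, Z) :=
  ⟨Quotient.lift f (by rintro a b (rfl | rfl); exacts [rfl, (hf _).symm]), by
    exact qm_quot.continuous_iff.2 f.continuous⟩

lemma qlift_qm {Z : Type} [TopologicalSpace Z] (f : C(E, Z)) (hf : ∀ e, f (-e) = f e) (e : E) :
    qlift f hf (qm e) = f e := rfl

/-- Induced maps. -/
def qmap (f : C(E, E')) (hf : ∀ e, f (-e) = -f e) : C(Q E, Q E') :=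
  qlift (qm.comp f) (fun e => by
    change qm (f (-e)) = qm (f e)
    rw [hf, qm_neg])

lemma qmap_qm (f : C(E, E')) (hf : ∀ e, f (-e) = -f e) (e : E) :
    qmap f hf (qm e) = qm (f e) := rfl

/-- homotopies out of the quotient -/
lemma qlift_homotopic {Z : Type} [TopologicalSpace Z] (H : C(unitInterval × E, Z))
    (hH : ∀ t e, H (t, -e) = H (t, e)) (f g : C(Q E, Z)) (hf : ∀ e, f (qm e) = H (0, e))
    (hg : ∀ e, g (qm e) = H (1, e)) : f.Homotopic g := by
  let K : unitInterval × Q E → Z := fun q => Quotient.lift (fun e => H (q.1, e))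
    (by rintro a b (rfl | rfl); exacts [rfl, (hH _ _).symm]) q.2
  have hq : IsOpenQuotientMap (Prod.map id (qm : C(E, Q E)) : unitInterval × E → unitInterval × Q E) :=
    IsOpenQuotientMap.id.prodMap qm_open
  have hK : Continuous K := by
    exact hq.isQuotientMap.continuous_iff.2 H.continuous
  refine ⟨⟨⟨K, hK⟩, ?_, ?_⟩⟩
  · intro x; obtain ⟨e, rfl⟩ := qm_surj x; exact (hf e).symm
  · intro x; obtain ⟨e, rfl⟩ := qm_surj x; exact (hg e).symm

lemma qmap_homotopic (H : C(unitInterval × E, E'))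
    (hH : ∀ t e, H (t, -e) = -H (t, e)) (f g : C(Q E, Q E')) (hf : ∀ e, f (qm e) = qm (H (0, e)))
    (hg : ∀ e, g (qm e) = qm (H (1, e))) : f.Homotopic g := by
  refine qlift_homotopic (qm.comp H) ?_ f g hf hg
  intro t e
  change qm (H (t, -e)) = qm (H (t, e))
  rw [hH, qm_neg]

/-- Equivariant homotopy equivalences. -/
lemma q_hequiv (f : C(E, E')) (g : C(E', E)) (hf : ∀ e, f (-e) = -f e) (hg : ∀ e, g (-e) = -g e)
    (H : C(unitInterval × E, E)) (hH : ∀ t e, H (t, -e) = -H (t, e))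
    (H0 : ∀ e, H (0, e) = g (f e)) (H1 : ∀ e, H (1, e) = e)
    (K : C(unitInterval × E', E')) (hK : ∀ t e, K (t, -e) = -K (t, e))
    (K0 : ∀ e, K (0, e) = f (g e)) (K1 : ∀ e, K (1, e) = e) :
    ∃ e : ContinuousMap.HomotopyEquiv (Q E) (Q E'), e.toFun = qmap f hf := by
  refine ⟨⟨qmap f hf, qmap g hg, ?_, ?_⟩, rfl⟩
  · refine qmap_homotopic H hH _ _ ?_ ?_
    · intro e; rw [H0]; rfl
    · intro e; rw [H1]; rfl
  · refine qmap_homotopic K hK _ _ ?_ ?_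
    · intro e; rw [K0]; rfl
    · intro e; rw [K1]; rfl

lemma qm_covering [T2Space E] (hfree : ∀ e : E, -e ≠ e) : IsCoveringMap (qm : C(E, Q E)) := by
  let _ : MulAction ℤˣ E :=
    { smul := fun u e => if u = 1 then e else -e
      one_smul := fun e => if_pos rfl
      mul_smul := by
        intro u v e
        change (if u * v = 1 then e else -e) = if u = 1 then (if v = 1 then e else -e) else
          -(if v = 1 then e else -e)
        rcases Int.units_eq_one_or u with rfl | rfl <;> rcases Int.units_eq_one_or v with rfl | rfl <;>
          simp }
  have hone : ∀ e : E, (1 : ℤˣ) • e = e := fun e => if_pos rfl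
  have hneg : ∀ e : E, (-1 : ℤˣ) • e = -e := fun e => if_neg (by decide)
  have : IsQuotientCoveringMap (qm : C(E, Q E)) ℤˣ :=
    { qm_quot with
      continuous_const_smul := by
        intro u
        rcases Int.units_eq_one_or u with rfl | rfl
        · simp only [hone]; exact continuous_id
        · simp only [hneg]; exact continuous_neg
      apply_eq_iff_mem_orbit := by
        intro a b
        rw [qm_eq, MulAction.mem_orbit_iff]
        constructor
        · rintro (rfl | rfl)
          · exact ⟨1, hone _⟩
          · exact ⟨-1, by rw [hneg, neg_neg]⟩
        · rintro ⟨u, rfl⟩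
          rcases Int.units_eq_one_or u with rfl | rfl
          · exact Or.inl (hone _).symm
          · exact Or.inr (by rw [hneg, neg_neg])
      disjoint := by
        intro e
        obtain ⟨U, V, hU, hV, heU, heV, hd⟩ := t2_separation (hfree e).symm
        refine ⟨U ∩ (fun x => -x) ⁻¹' V, (hU.inter (hV.preimage continuous_neg)).mem_nhds
          ⟨heU, heV⟩, ?_⟩
        rintro u ⟨x, ⟨y, hy, rfl⟩, hx⟩
        rcases Int.units_eq_one_or u with rfl | rfl
        · rfl
        · exfalso
          simp only [hneg] at hx
          exact Set.disjoint_left.1 hd hx.1 hy.2 }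
  exact this.isCoveringMap

/-- The numerical consequence of the transfer sequence. -/
lemma gysin_num [T2Space E] (hfree : ∀ e : E, -e ≠ e)
    (hE : ∀ n, Module.Finite (ZMod 2) (HH E n)) (hQ : ∀ n, Module.Finite (ZMod 2) (HH (Q E) n)) :
    ∃ r : ℕ → ℕ, r 0 = 0 ∧ ∀ i, bt E i + r i + r (i+1) = 2 * bt (Q E) i ∧ r i ≤ bt (Q E) i ∧
      r (i+1) ≤ bt (Q E) i := by
  have h := DC_of_cover (qm : C(E, Q E)) ⟨fun e => -e, continuous_neg⟩ (qm_covering hfree) qm_surj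
    qm_neg hfree (fun a b h => qm_eq.1 h)
  obtain ⟨δ, h1, h2, h3, h4⟩ := h.gysin
  let p : ∀ n, HH E n →ₗ[ZMod 2] HH (Q E) n := fun n => Hm (CsF.map (Sgm qm)) n
  let t : ∀ n, HH (Q E) n →ₗ[ZMod 2] HH E n := fun n => Hm h.trCx n
  let d : ∀ n, HH (Q E) (n+1) →ₗ[ZMod 2] HH (Q E) n := δ
  have h1 : ∀ n, LinearMap.range (t n) = LinearMap.ker (p n) := h1
  have h2 : ∀ n, LinearMap.range (p (n+1)) = LinearMap.ker (d n) := h2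
  have h3 : ∀ n, LinearMap.range (d n) = LinearMap.ker (t n) := h3
  have h4 : LinearMap.range (p 0) = ⊤ := LinearMap.range_eq_top.2 h4
  have a1 : ∀ n, Module.finrank (ZMod 2) (LinearMap.range (p n)) +
      Module.finrank (ZMod 2) (LinearMap.ker (p n)) = bt E n :=
    fun n => LinearMap.finrank_range_add_finrank_ker (p n)
  have a2 : ∀ n, Module.finrank (ZMod 2) (LinearMap.range (t n)) +
      Module.finrank (ZMod 2) (LinearMap.ker (t n)) = bt (Q E) n :=
    fun n => LinearMap.finrank_range_add_finrank_ker (t n)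
  have a3 : ∀ n, Module.finrank (ZMod 2) (LinearMap.range (d n)) +
      Module.finrank (ZMod 2) (LinearMap.ker (d n)) = bt (Q E) (n+1) :=
    fun n => LinearMap.finrank_range_add_finrank_ker (d n)
  have a4 : Module.finrank (ZMod 2) (LinearMap.range (p 0)) = bt (Q E) 0 := by
    rw [h4]; exact finrank_top _ _
  obtain ⟨r, r0, hr⟩ : ∃ r : ℕ → ℕ, r 0 = 0 ∧
      ∀ n, r (n+1) = Module.finrank (ZMod 2) (LinearMap.range (d n)) :=
    ⟨fun n => Nat.rec 0 (fun n _ => Module.finrank (ZMod 2) (LinearMap.range (d n))) n, rfl,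
      fun _ => rfl⟩
  refine ⟨r, r0, ?_⟩
  intro i
  have b1 := a1 i
  have b2 := a2 i
  rw [← h1] at b1
  rw [← h3] at b2
  cases i with
  | zero =>
    have e := hr 0
    omega
  | succ i =>
    have b3 := a3 i
    rw [h2] at b1
    have e := hr i
    have e' := hr (i+1)
    omega

end quot
end SklProof


namespace SklProof
open Simplicial Opposite

/-! ## Numerical consequences of Mayer-Vietoris -/
section mvnum
variable {P U V W Y : Type} [TopologicalSpace P] [TopologicalSpace U] [TopologicalSpace V]
  [TopologicalSpace W] [TopologicalSpace Y]

/-- Finite-dimensional homology. -/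
def FinH (X : Type) [TopologicalSpace X] : Prop := ∀ n, Module.Finite (ZMod 2) (HH X n)

lemma FinH.of_eq {X : Type} [TopologicalSpace X] (h : FinH Y) (e : ContinuousMap.HomotopyEquiv X Y) :
    FinH X := fun n => by
  have := h n
  exact fin_of_eq e n

variable {a : C(P, U)} {b : C(P, V)} {i : C(U, W)} {j : C(V, W)}

/-- The Mayer-Vietoris data in terms of spaces -/
lemma MV_space (h : MV (Cm a) (Cm b) (Cm i) (Cm j)) :
    ∃ δ : ∀ n, HH W (n+1) →ₗ[ZMod 2] HH P n,
      (∀ n y z, Hs i n y = Hs j n z → ∃ w, Hs a n w = y ∧ Hs b n w = z) ∧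
      (∀ n x, δ n x = 0 ↔ ∃ y z, x = Hs i (n+1) y + Hs j (n+1) z) ∧
      (∀ n w, (∃ x, δ n x = w) ↔ Hs a n w = 0 ∧ Hs b n w = 0) ∧
      (∀ x, ∃ y z, x = Hs i 0 y + Hs j 0 z) := h

lemma mv_aux (h : MV (Cm a) (Cm b) (Cm i) (Cm j)) (sq : i.comp a = j.comp b)
    (ha : ∀ n, Function.Surjective (Hs a n)) :
    ∃ δ : ∀ n, HH W (n+1) →ₗ[ZMod 2] HH P n,
      (∀ n, LinearMap.ker (δ n) = LinearMap.range (Hs j (n+1))) ∧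
      (∀ n, LinearMap.range (δ n) = LinearMap.ker (Hs a n) ⊓ LinearMap.ker (Hs b n)) ∧
      LinearMap.range (Hs j 0) = ⊤ := by
  obtain ⟨δ, h1, h2, h3, h4⟩ := MV_space h
  have key : ∀ n y z, ∃ z', Hs i n y + Hs j n z = Hs j n z' := by
    intro n y z
    obtain ⟨w, rfl⟩ := ha n y
    refine ⟨Hs b n w + z, ?_⟩
    have e : Hs i n (Hs a n w) = Hs j n (Hs b n w) := by
      have := congr($(congrArg (fun f => Hs f n) sq) w)
      simpa only [Hs_comp, LinearMap.comp_apply] using this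
    rw [map_add, e]
  refine ⟨δ, fun n => ?_, fun n => ?_, ?_⟩
  · ext x
    rw [LinearMap.mem_ker, h2]
    constructor
    · rintro ⟨y, z, rfl⟩
      obtain ⟨z', e⟩ := key _ y z
      exact ⟨z', e.symm⟩
    · rintro ⟨z, rfl⟩
      exact ⟨0, z, by rw [map_zero, zero_add]⟩
  · ext w
    rw [LinearMap.mem_range, h3]
    rfl
  · refine LinearMap.range_eq_top.2 fun x => ?_
    obtain ⟨y, z, rfl⟩ := h4 x
    obtain ⟨z', e⟩ := key _ y z
    exact ⟨z', e.symm⟩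

lemma mv_fin (h : MV (Cm a) (Cm b) (Cm i) (Cm j)) (sq : i.comp a = j.comp b)
    (ha : ∀ n, Function.Surjective (Hs a n)) (fP : FinH P) (fV : FinH V) : FinH W := by
  obtain ⟨δ, h1, h2, h3⟩ := mv_aux h sq ha
  intro n
  have := fP
  cases n with
  | zero =>
    have := fV 0
    exact Module.Finite.of_surjective _ (LinearMap.range_eq_top.1 h3)
  | succ n =>
    have := fV (n+1)
    have := fP n
    have f1 : Module.Finite (ZMod 2) (LinearMap.ker (δ n)) := by
      rw [h1]; infer_instance
    have f2 : Module.Finite (ZMod 2) (HH W (n+1) ⧸ LinearMap.ker (δ n)) :=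
      Module.Finite.equiv (δ n).quotKerEquivRange.symm
    exact Module.Finite.of_submodule_quotient (LinearMap.ker (δ n))

lemma mv_le (h : MV (Cm a) (Cm b) (Cm i) (Cm j)) (sq : i.comp a = j.comp b)
    (ha : ∀ n, Function.Surjective (Hs a n)) (fP : FinH P) (fV : FinH V) :
    bt W 0 ≤ bt V 0 ∧ ∀ n, bt W (n+1) + bt U n ≤ bt V (n+1) + bt P n := by
  have fW := mv_fin h sq ha fP fV
  obtain ⟨δ, h1, h2, h3⟩ := mv_aux h sq ha
  constructor
  · have := fV 0
    have := LinearMap.finrank_range_le (Hs j 0)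
    rw [h3, finrank_top] at this
    exact this
  · intro n
    have := fV (n+1)
    have := fP n
    have := fW (n+1)
    have e1 : _ = bt W (n+1) := LinearMap.finrank_range_add_finrank_ker (δ n)
    have e2 : _ = bt P n := LinearMap.finrank_range_add_finrank_ker (Hs a n)
    rw [LinearMap.range_eq_top.2 (ha n), finrank_top] at e2
    have e3 : _ ≤ bt V (n+1) := LinearMap.finrank_range_le (Hs j (n+1))
    rw [h1] at e1
    have e4 : Module.finrank (ZMod 2) (LinearMap.range (δ n)) ≤
        Module.finrank (ZMod 2) (LinearMap.ker (Hs a n)) :=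
      Submodule.finrank_mono (by rw [h2]; exact inf_le_left)
    change bt W (n+1) + Module.finrank (ZMod 2) (HH U n) ≤ _
    omega

lemma mv_eq (h : MV (Cm a) (Cm b) (Cm i) (Cm j)) (sq : i.comp a = j.comp b)
    (ha : ∀ n, Function.Surjective (Hs a n)) (hab : ∀ n w, Hs a n w = 0 → Hs b n w = 0)
    (hj : ∀ n, Function.Injective (Hs j n)) (fP : FinH P) (fV : FinH V) :
    bt W 0 = bt V 0 ∧ ∀ n, bt W (n+1) + bt U n = bt V (n+1) + bt P n := by
  have fW := mv_fin h sq ha fP fV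
  obtain ⟨δ, h1, h2, h3⟩ := mv_aux h sq ha
  constructor
  · have := LinearMap.finrank_range_of_inj (hj 0)
    rw [h3, finrank_top] at this
    exact this
  · intro n
    have := fV (n+1)
    have := fP n
    have := fW (n+1)
    have e1 : _ = bt W (n+1) := LinearMap.finrank_range_add_finrank_ker (δ n)
    have e2 : _ = bt P n := LinearMap.finrank_range_add_finrank_ker (Hs a n)
    rw [LinearMap.range_eq_top.2 (ha n), finrank_top] at e2
    have e3 : _ = bt V (n+1) := LinearMap.finrank_range_of_inj (hj (n+1))
    rw [h1] at e1
    have e4 : LinearMap.range (δ n) = LinearMap.ker (Hs a n) := by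
      rw [h2]; exact inf_eq_left.2 fun w hw => hab n w hw
    rw [e4] at e1
    change bt W (n+1) + Module.finrank (ZMod 2) (HH U n) = _
    omega

/-- Mayer-Vietoris over a base. -/
lemma mv_over (h : MV (Cm a) (Cm b) (Cm i) (Cm j)) (sq : i.comp a = j.comp b)
    (π : C(W, Y)) (hU : ∀ n, Function.Bijective (Hs (π.comp i) n))
    (hV : ∀ n, Function.Bijective (Hs (π.comp j) n)) (s : C(Y, P))
    (hs : ((π.comp i).comp a).comp s = ContinuousMap.id Y) (fP : FinH P) (fY : FinH Y) :
    FinH W ∧ bt W 0 = bt Y 0 ∧ ∀ n, bt W (n+1) + bt Y n = bt Y (n+1) + bt P n := by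
  have ha : ∀ n, Function.Surjective (Hs a n) := by
    intro n y
    refine ⟨Hs s n (Hs (π.comp i) n y), (hU n).1 ?_⟩
    have := congr($(congrArg (fun f => Hs f n) hs) (Hs (π.comp i) n y))
    rw [Hs_comp, Hs_comp, Hs_id] at this
    exact this
  have hab : ∀ n w, Hs a n w = 0 → Hs b n w = 0 := by
    intro n w hw
    apply (hV n).1
    have e : (π.comp j).comp b = (π.comp i).comp a := by
      rw [ContinuousMap.comp_assoc, ← sq, ← ContinuousMap.comp_assoc]
    have := congr($(congrArg (fun f => Hs f n) e) w)
    rw [Hs_comp (a), LinearMap.comp_apply, hw, map_zero, Hs_comp b] at this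
    rw [map_zero]
    exact this
  have hj : ∀ n, Function.Injective (Hs j n) := by
    intro n
    have := (hV n).1
    rw [Hs_comp] at this
    exact Function.Injective.of_comp this
  have eV : ∀ n, HH V n ≃ₗ[ZMod 2] HH Y n := fun n => LinearEquiv.ofBijective _ (hV n)
  have eU : ∀ n, HH U n ≃ₗ[ZMod 2] HH Y n := fun n => LinearEquiv.ofBijective _ (hU n)
  have fV : FinH V := fun n => by
    have := fY n
    exact Module.Finite.equiv (eV n).symm
  obtain ⟨h0, h1⟩ := mv_eq h sq ha hab hj fP fV
  have bU : ∀ n, bt U n = bt Y n := fun n => (eU n).finrank_eq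
  have bV : ∀ n, bt V n = bt Y n := fun n => (eV n).finrank_eq
  refine ⟨mv_fin h sq ha fP fV, by rw [h0, bV], fun n => ?_⟩
  rw [← bU, ← bV]; exact h1 n

/-- Mayer-Vietoris over a base, disjoint case. -/
lemma mv_disj (h : MV (Cm a) (Cm b) (Cm i) (Cm j))
    (π : C(W, Y)) (hU : ∀ n, Function.Bijective (Hs (π.comp i) n))
    (hV : ∀ n, Function.Bijective (Hs (π.comp j) n)) (hP : ∀ n (x : HH P n), x = 0)
    (fY : FinH Y) :
    FinH W ∧ ∀ n, bt W n = 2 * bt Y n := by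
  obtain ⟨δ, h1, h2, h3, h4⟩ := MV_space h
  have eV : ∀ n, HH V n ≃ₗ[ZMod 2] HH Y n := fun n => LinearEquiv.ofBijective _ (hV n)
  have eU : ∀ n, HH U n ≃ₗ[ZMod 2] HH Y n := fun n => LinearEquiv.ofBijective _ (hU n)
  have bij : ∀ n, Function.Bijective ((Hs i n).coprod (Hs j n)) := by
    intro n
    constructor
    · rw [← LinearMap.ker_eq_bot, LinearMap.ker_eq_bot']
      rintro ⟨y, z⟩ hyz
      rw [LinearMap.coprod_apply] at hyz
      obtain ⟨w, rfl, rfl⟩ := h1 n y z (eq_of_add_mod2 hyz)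
      rw [hP n w, map_zero, map_zero]; rfl
    · intro x
      have : ∃ y z, x = Hs i n y + Hs j n z := by
        cases n with
        | zero => exact h4 x
        | succ n => exact (h2 n x).1 (hP n _)
      obtain ⟨y, z, rfl⟩ := this
      exact ⟨(y, z), rfl⟩
  have e : ∀ n, (HH Y n × HH Y n) ≃ₗ[ZMod 2] HH W n := fun n =>
    ((eU n).symm.prodCongr (eV n).symm).trans (LinearEquiv.ofBijective _ (bij n))
  constructor
  · intro n
    have := fY n
    exact Module.Finite.equiv (e n)
  · intro n
    have := fY n
    have h := (e n).finrank_eq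
    rw [Module.finrank_prod] at h
    change Module.finrank (ZMod 2) (HH W n) = 2 * Module.finrank (ZMod 2) (HH Y n)
    omega

end mvnum
end SklProof


namespace SklProof
open Simplicial Opposite

/-! ## Homology of the empty space and of a point -/
section point
variable {X : Type} [TopologicalSpace X]

lemma HH_empty [IsEmpty X] (n : ℕ) (x : HH X n) : x = 0 := by
  obtain ⟨c, rfl⟩ := cls_surj (K := Cs (Sg X)) n x
  rw [cls_eq_zero]
  refine ⟨0, ?_⟩
  rw [map_zero]
  refine ch_ind (p := fun c => 0 = c) c.1 rfl (fun s => ?_) ?_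
  · obtain ⟨f, rfl⟩ := sx.surjective s
    exact isEmptyElim (f (ev n 0))
  · rintro _ _ rfl rfl; exact (add_zero _).symm

variable [Unique X]

/-- the unique simplex -/
noncomputable def us (X : Type) [TopologicalSpace X] [Unique X] (n : ℕ) : (Sg X) _⦋n⦌ :=
  sx (ContinuousMap.const (Dl n) default)

lemma us_eq {n : ℕ} (s : (Sg X) _⦋n⦌) : s = us X n := by
  obtain ⟨f, rfl⟩ := sx.surjective s
  exact congrArg sx (ContinuousMap.ext fun a => Subsingleton.elim _ _)

lemma us_ne (n : ℕ) : bas (us X n) ≠ 0 := by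
  intro h
  have h2 : lin (fun _ => (1 : ZMod 2)) (bas (us X n)) = 0 := by rw [h, map_zero]
  rw [lin_bas] at h2
  exact absurd h2 (by decide)

lemma pt_ch {n : ℕ} (c : (Cs (Sg X)).X n) : c = 0 ∨ c = bas (us X n) := by
  refine ch_ind (p := fun c => c = 0 ∨ c = bas (us X n)) c (Or.inl rfl)
    (fun s => Or.inr (by rw [us_eq s])) ?_
  rintro a b (rfl | rfl) (rfl | rfl)
  · exact Or.inl (add_zero _)
  · exact Or.inr (zero_add _)
  · exact Or.inr (add_zero _)
  · exact Or.inl (add_self_mod2 _)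

lemma pt_dl (n : ℕ) : dl (Sg X) n (bas (us X (n+1))) = ((n : ZMod 2)) • bas (us X n) := by
  rw [dl_bas]
  have : ∀ i : Fin (n+2), bas ((Sg X).δ i (us X (n+1))) = bas (us X n) := fun i => by
    rw [us_eq ((Sg X).δ i (us X (n+1)))]
  rw [Finset.sum_congr rfl fun i _ => this i, Finset.sum_const, Finset.card_univ, Fintype.card_fin,
    ← Nat.cast_smul_eq_nsmul (ZMod 2)]
  congr 1
  push_cast
  have : (2 : ZMod 2) = 0 := by decide
  rw [this, add_zero]

lemma pt_cyc {n : ℕ} (x : LinearMap.ker ((Cs (Sg X)).d (n+1) (nx (n+1))).hom) :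
    dl (Sg X) n x.1 = 0 := by
  have : ∀ m, m = nx (n+1) → ((Cs (Sg X)).d (n+1) m).hom x.1 = 0 := by
    rintro m rfl; exact x.2
  exact this n (nx_succ n).symm

lemma pt_succ (n : ℕ) (x : HH X (n+1)) : x = 0 := by
  obtain ⟨c, rfl⟩ := cls_surj (K := Cs (Sg X)) (n+1) x
  rw [cls_eq_zero]
  rcases pt_ch c.1 with h | h
  · exact ⟨0, by rw [h, map_zero]⟩
  · have hc := pt_cyc c
    rw [h, pt_dl] at hc
    have hn : (n : ZMod 2) = 0 := by
      by_contra h0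
      exact us_ne n ((smul_eq_zero.1 hc).resolve_left h0)
    refine ⟨bas (us X (n+2)), ?_⟩
    have e := pt_dl (X := X) (n+1)
    rw [h]
    refine Eq.trans e ?_
    push_cast
    rw [hn, zero_add, one_smul]

lemma pt_zero : Module.finrank (ZMod 2) (HH X 0) = 1 := by
  have h0 : (Cs (Sg X)).d 0 (nx 0) = 0 := (Cs (Sg X)).shape _ _ (by rw [nx_zero]; simp)
  have hb : bas (us X 0) ∈ LinearMap.ker ((Cs (Sg X)).d 0 (nx 0)).hom := by
    rw [h0]; exact LinearMap.mem_ker.2 rfl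
  refine finrank_eq_one (cls _ 0 ⟨bas (us X 0), hb⟩) ?_ ?_
  · intro h
    rw [cls_eq_zero] at h
    obtain ⟨y, hy⟩ := h
    have hy : dl (Sg X) 0 y = bas (us X 0) := hy
    rcases pt_ch y with rfl | rfl
    · rw [map_zero] at hy
      exact us_ne 0 hy.symm
    · rw [pt_dl] at hy
      refine us_ne (X := X) 0 (hy.symm.trans ?_)
      push_cast
      exact zero_smul _ _
  · intro w
    obtain ⟨c, rfl⟩ := cls_surj (K := Cs (Sg X)) 0 w
    rcases pt_ch c.1 with h | h
    · refine ⟨0, ?_⟩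
      have : c = 0 := Subtype.ext h
      rw [this, zero_smul, map_zero]
    · refine ⟨1, ?_⟩
      have : c = ⟨bas (us X 0), hb⟩ := Subtype.ext h
      rw [this, one_smul]

lemma pt_fin : FinH X := by
  intro n
  cases n with
  | zero => exact Module.finite_of_finrank_eq_succ pt_zero
  | succ n =>
    have : Subsingleton (HH X (n+1)) := ⟨fun a b => by rw [pt_succ n a, pt_succ n b]⟩
    infer_instance

lemma pt_bt (n : ℕ) : bt X n = if n = 0 then 1 else 0 := by
  cases n with
  | zero => exact pt_zero
  | succ n =>
    have : Subsingleton (HH X (n+1)) := ⟨fun a b => by rw [pt_succ n a, pt_succ n b]⟩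
    rw [if_neg (Nat.succ_ne_zero n)]
    exact Module.finrank_zero_of_subsingleton

end point
end SklProof


namespace SklProof
open Simplicial Opposite

/-! ## Products with punctured vector spaces -/
section geom
set_option linter.unusedSectionVars false

lemma bij_of_retract {U Y : Type} [TopologicalSpace U] [TopologicalSpace Y] (π : C(U, Y))
    (s : C(Y, U)) (h : π.comp s = ContinuousMap.id Y)
    (h' : (s.comp π).Homotopic (ContinuousMap.id U)) (n : ℕ) : Function.Bijective (Hs π n) := by
  have e1 : ∀ y, Hs π n (Hs s n y) = y := fun y => by
    have := congr($(congrArg (fun f => Hs f n) h) y)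
    rw [Hs_comp, Hs_id] at this
    exact this
  have e2 : ∀ y, Hs s n (Hs π n y) = y := fun y => by
    have := congr($(Hs_homotopic h' n) y)
    rw [Hs_comp, Hs_id] at this
    exact this
  exact ⟨Function.LeftInverse.injective e2, Function.RightInverse.surjective e1⟩

/-- The punctured space. -/
def G (F : Type) [Zero F] : Type := {x : F // x ≠ 0}

variable {F : Type} [NormedAddCommGroup F] [NormedSpace ℝ F]
variable {Y : Type} [TopologicalSpace Y]

instance : TopologicalSpace (G F) := inferInstanceAs (TopologicalSpace {x : F // x ≠ 0})
instance : T2Space (G F) := inferInstanceAs (T2Space {x : F // x ≠ 0})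

@[fun_prop]
lemma G_cont : Continuous (fun x : G F => x.1) := continuous_subtype_val

lemma G_mk {Z : Type} [TopologicalSpace Z] {f : Z → F} (hf : Continuous f) (h : ∀ z, f z ≠ 0) :
    Continuous (fun z => (⟨f z, h z⟩ : G F)) := Continuous.subtype_mk hf h

lemma G_ext {x y : G F} (h : x.1 = y.1) : x = y := Subtype.ext h

instance : InvolutiveNeg (G F) where
  neg x := ⟨-x.1, neg_ne_zero.2 x.2⟩
  neg_neg x := Subtype.ext (neg_neg x.1)

lemma G_neg (x : G F) : (-x).1 = -x.1 := rfl

instance : ContinuousNeg (G F) where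
  continuous_neg := G_mk (by fun_prop) _

lemma G_free (x : G F) : -x ≠ x := by
  intro h
  have : -x.1 = x.1 := congrArg Subtype.val h
  have h2 : (2 : ℝ) • x.1 = 0 := by
    rw [two_smul]
    nth_rewrite 1 [← this]
    exact neg_add_cancel _
  exact x.2 ((smul_eq_zero.1 h2).resolve_left two_ne_zero)

/-- the open half pieces -/
def GU (F Y : Type) [NormedAddCommGroup F] (ε : ℝ) : Set (G (F × ℝ) × Y) :=
  {w | w.1.1.1 ≠ 0 ∨ 0 < ε * w.1.1.2}

/-- the intersection -/
def GP (F Y : Type) [NormedAddCommGroup F] : Set (G (F × ℝ) × Y) := {w | w.1.1.1 ≠ 0}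

lemma GU_open (ε : ℝ) : IsOpen (GU F Y ε) := by
  refine IsOpen.union ?_ ?_
  · exact isOpen_ne.preimage (f := fun w : G (F × ℝ) × Y => w.1.1.1) (by fun_prop)
  · exact isOpen_Ioi.preimage (f := fun w : G (F × ℝ) × Y => ε * w.1.1.2) (by fun_prop)

/-- projection to the base -/
def GUpr (ε : ℝ) : C(GU F Y ε, Y) := ⟨fun w => w.1.2, by fun_prop⟩

lemma GU_bij (ε : ℝ) (hε : ε ≠ 0) (n : ℕ) :
    Function.Bijective (Hs (GUpr ε : C(GU F Y ε, Y)) n) := by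
  have h2 : 0 < ε * ε := mul_self_pos.2 hε
  let s : C(Y, GU F Y ε) := ⟨fun y => ⟨(⟨(0, ε), fun h => hε (congrArg Prod.snd h)⟩, y), Or.inr h2⟩, by
    refine Continuous.subtype_mk ?_ _
    exact continuous_const.prodMk continuous_id⟩
  have key : ∀ (q : unitInterval × GU F Y ε), q.1.1 • q.2.1.1.1.1 ≠ 0 ∨
      0 < ε * (q.1.1 * q.2.1.1.1.2 + (1 - q.1.1) * ε) := by
    rintro ⟨⟨r, hr0, hr1⟩, ⟨⟨⟨⟨x, t⟩, hx⟩, y⟩, hw⟩⟩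
    change r • x ≠ 0 ∨ 0 < ε * (r * t + (1 - r) * ε)
    have e : ε * (r * t + (1 - r) * ε) = r * (ε * t) + (1 - r) * (ε * ε) := by ring
    rw [e]
    have hw : x ≠ 0 ∨ 0 < ε * t := hw
    rcases eq_or_lt_of_le hr0 with h | h
    · right; rw [← h]; simpa using h2
    · rcases hw with hw | hw
      · left; exact smul_ne_zero h.ne' hw
      · right
        have : 0 ≤ (1 - r) * (ε * ε) := mul_nonneg (by linarith) h2.le
        have := mul_pos h hw
        linarith
  have key0 : ∀ (q : unitInterval × GU F Y ε), ((q.1.1 • q.2.1.1.1.1,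
      q.1.1 * q.2.1.1.1.2 + (1 - q.1.1) * ε) : F × ℝ) ≠ 0 := by
    intro q h
    have h1 := congrArg Prod.fst h
    have h2 := congrArg Prod.snd h
    simp only [Prod.fst_zero, Prod.snd_zero] at h1 h2
    rcases key q with h | h
    · exact h h1
    · rw [h2, mul_zero] at h; exact lt_irrefl _ h
  refine bij_of_retract _ s rfl ⟨⟨⟨fun q => ⟨(⟨_, key0 q⟩, q.2.1.2), key q⟩, ?_⟩, ?_, ?_⟩⟩ n
  · refine Continuous.subtype_mk ?_ _
    refine Continuous.prodMk (G_mk ?_ _) (by fun_prop)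
    fun_prop
  · intro w
    refine Subtype.ext (Prod.ext (G_ext (Prod.ext ?_ ?_)) rfl)
    · change (0 : ℝ) • w.1.1.1.1 = 0
      exact zero_smul _ _
    · change (0 : ℝ) * _ + (1 - 0) * ε = ε
      ring
  · intro w
    refine Subtype.ext (Prod.ext (G_ext (Prod.ext ?_ ?_)) rfl)
    · change (1 : ℝ) • w.1.1.1.1 = w.1.1.1.1
      exact one_smul _ _
    · change (1 : ℝ) * w.1.1.1.2 + (1 - 1) * ε = w.1.1.1.2
      ring

/-- the intersection is homotopy equivalent to the smaller product -/
lemma GP_heq : Nonempty (ContinuousMap.HomotopyEquiv (GP F Y) (G F × Y)) := by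
  have k0 : ∀ (q : unitInterval × GP F Y), ((q.2.1.1.1.1, q.1.1 * q.2.1.1.1.2) : F × ℝ) ≠ 0 :=
    fun q h => q.2.2 (congrArg Prod.fst h)
  refine ⟨⟨⟨fun w => (⟨w.1.1.1.1, w.2⟩, w.1.2), ?_⟩,
    ⟨fun q => ⟨(⟨(q.1.1, 0), fun h => q.1.2 (congrArg Prod.fst h)⟩, q.2), q.1.2⟩, ?_⟩, ?_, ?_⟩⟩
  · exact (G_mk (by fun_prop) _).prodMk (by fun_prop)
  · exact Continuous.subtype_mk ((G_mk (by fun_prop) _).prodMk (by fun_prop)) _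
  · refine ⟨⟨⟨fun q => ⟨(⟨_, k0 q⟩, q.2.1.2), q.2.2⟩, ?_⟩, ?_, ?_⟩⟩
    · refine Continuous.subtype_mk ?_ _
      refine Continuous.prodMk (G_mk ?_ _) (by fun_prop)
      fun_prop
    · intro w
      refine Subtype.ext (Prod.ext (G_ext (Prod.ext rfl ?_)) rfl)
      change (0 : ℝ) * _ = 0
      ring
    · intro w
      refine Subtype.ext (Prod.ext (G_ext (Prod.ext rfl ?_)) rfl)
      change (1 : ℝ) * w.1.1.1.2 = w.1.1.1.2
      ring
  · exact ContinuousMap.Homotopic.refl _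

lemma GP_sub (ε : ℝ) : GP F Y ⊆ GU F Y ε := fun _ h => Or.inl h

/-- inclusion of subtypes -/
def incl {W : Type} [TopologicalSpace W] {A B : Set W} (h : A ⊆ B) : C(A, B) :=
  ⟨Set.inclusion h, continuous_inclusion h⟩

/-- inclusion of a subtype -/
def sval {W : Type} [TopologicalSpace W] (A : Set W) : C(A, W) := ⟨Subtype.val, continuous_subtype_val⟩

lemma G_MV : MV (Cm (incl (GP_sub 1) : C(GP F Y, GU F Y 1)))
    (Cm (incl (GP_sub (-1)) : C(GP F Y, GU F Y (-1)))) (Cm (sval (GU F Y 1)))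
    (Cm (sval (GU F Y (-1)))) := by
  apply MV_top
  · rfl
  · exact Topology.IsEmbedding.inclusion (GP_sub 1)
  · exact (GU_open 1).isOpenEmbedding_subtypeVal
  · exact (GU_open (-1)).isOpenEmbedding_subtypeVal
  · rintro ⟨⟨⟨x, t⟩, h⟩, y⟩
    by_cases hx : x = 0
    · have ht : t ≠ 0 := by rintro rfl; exact h (by rw [hx]; rfl)
      rcases lt_or_gt_of_ne ht with ht | ht
      · right; exact ⟨⟨_, Or.inr (by change 0 < -1 * t; linarith)⟩, rfl⟩
      · left; exact ⟨⟨_, Or.inr (by change 0 < 1 * t; linarith)⟩, rfl⟩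
    · exact Or.inl ⟨⟨_, Or.inl hx⟩, rfl⟩
  · rintro ⟨u, hu⟩ ⟨v, hv⟩ (h : u = v)
    subst h
    refine ⟨⟨u, ?_⟩, rfl⟩
    rcases hu with hu | hu
    · exact hu
    · rcases hv with hv | hv
      · exact hv
      · exfalso; linarith

lemma G_step [Nontrivial F] (fY : FinH Y) (fF : FinH (G F × Y)) :
    FinH (G (F × ℝ) × Y) ∧ bt (G (F × ℝ) × Y) 0 = bt Y 0 ∧
      ∀ n, bt (G (F × ℝ) × Y) (n+1) + bt Y n = bt Y (n+1) + bt (G F × Y) n := by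
  obtain ⟨e⟩ := GP_heq (F := F) (Y := Y)
  obtain ⟨x0, hx0⟩ := exists_ne (0 : F)
  have := mv_over (G_MV (F := F) (Y := Y)) rfl ⟨fun w => w.2, by fun_prop⟩
    (GU_bij 1 one_ne_zero) (GU_bij (-1) (by norm_num))
    ⟨fun y => ⟨(⟨(x0, 0), fun h => hx0 (congrArg Prod.fst h)⟩, y), hx0⟩,
      Continuous.subtype_mk (continuous_const.prodMk continuous_id) _⟩ rfl (fF.of_eq e) fY
  simpa only [bt_eq e] using this

lemma G_base [Subsingleton F] (fY : FinH Y) :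
    FinH (G (F × ℝ) × Y) ∧ ∀ n, bt (G (F × ℝ) × Y) n = 2 * bt Y n := by
  have : IsEmpty (GP F Y) := ⟨fun w => w.2 (Subsingleton.elim _ _)⟩
  exact mv_disj (G_MV (F := F) (Y := Y)) ⟨fun w => w.2, by fun_prop⟩
    (GU_bij 1 one_ne_zero) (GU_bij (-1) (by norm_num)) HH_empty fY

end geom
end SklProof


namespace SklProof
open Simplicial Opposite

/-! ## Upper bounds for the quotients -/
instance prodCN {E E' : Type} [TopologicalSpace E] [InvolutiveNeg E] [ContinuousNeg E]
    [TopologicalSpace E'] [InvolutiveNeg E'] [ContinuousNeg E'] : ContinuousNeg (E × E') where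
  continuous_neg := (continuous_neg.comp continuous_fst).prodMk (continuous_neg.comp continuous_snd)

section qgeom
set_option linter.unusedSectionVars false

variable {F : Type} [NormedAddCommGroup F] [NormedSpace ℝ F]
variable {Y : Type} [TopologicalSpace Y]

/-- upper half -/
def KU (F Y : Type) [NormedAddCommGroup F] : Set (G (F × ℝ) × Y) := {w | 0 < w.1.1.2}

/-- intersection -/
def KP (F Y : Type) [NormedAddCommGroup F] : Set (G (F × ℝ) × Y) := {w | w.1.1.1 ≠ 0 ∧ 0 < w.1.1.2}

lemma KU_open : IsOpen (KU F Y) :=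
  isOpen_Ioi.preimage (f := fun w : G (F × ℝ) × Y => w.1.1.2) (by fun_prop)

lemma GP_open : IsOpen (GP F Y) :=
  isOpen_ne.preimage (f := fun w : G (F × ℝ) × Y => w.1.1.1) (by fun_prop)

lemma KP_KU : KP F Y ⊆ KU F Y := fun _ h => h.2
lemma KP_GP : KP F Y ⊆ GP F Y := fun _ h => h.1

lemma comb_pos {r t : ℝ} (h0 : 0 ≤ r) (h1 : r ≤ 1) (ht : 0 < t) : 0 < r * t + (1 - r) := by
  rcases eq_or_lt_of_le h0 with h | h
  · rw [← h]; norm_num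
  · have := mul_pos h ht
    linarith

lemma snd_ne {x : F} {t : ℝ} (h : t ≠ 0) : ((x, t) : F × ℝ) ≠ 0 := fun e => h (congrArg Prod.snd e)
lemma fst_ne {x : F} {t : ℝ} (h : x ≠ 0) : ((x, t) : F × ℝ) ≠ 0 := fun e => h (congrArg Prod.fst e)

lemma KU_heq : Nonempty (ContinuousMap.HomotopyEquiv (KU F Y) Y) := by
  have k : ∀ (q : unitInterval × KU F Y), 0 < q.1.1 * q.2.1.1.1.2 + (1 - q.1.1) :=
    fun q => comb_pos q.1.2.1 q.1.2.2 q.2.2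
  refine ⟨⟨⟨fun w => w.1.2, by fun_prop⟩,
    ⟨fun y => ⟨(⟨(0, 1), snd_ne one_ne_zero⟩, y), (one_pos : (0:ℝ) < 1)⟩, ?_⟩, ?_, ContinuousMap.Homotopic.refl _⟩⟩
  · exact Continuous.subtype_mk (continuous_const.prodMk continuous_id) _
  · refine ⟨⟨⟨fun q => ⟨(⟨(q.1.1 • q.2.1.1.1.1, q.1.1 * q.2.1.1.1.2 + (1 - q.1.1)),
      snd_ne (k q).ne'⟩, q.2.1.2), k q⟩, ?_⟩, ?_, ?_⟩⟩
    · refine Continuous.subtype_mk ?_ _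
      refine Continuous.prodMk (G_mk ?_ _) (by fun_prop)
      fun_prop
    · intro w
      refine Subtype.ext (Prod.ext (G_ext (Prod.ext ?_ ?_)) rfl)
      · exact zero_smul ℝ w.1.1.1.1
      · change (0 : ℝ) * _ + (1 - 0) = 1
        ring
    · intro w
      refine Subtype.ext (Prod.ext (G_ext (Prod.ext ?_ ?_)) rfl)
      · exact one_smul ℝ w.1.1.1.1
      · change (1 : ℝ) * w.1.1.1.2 + (1 - 1) = w.1.1.1.2
        ring

lemma KP_heq : Nonempty (ContinuousMap.HomotopyEquiv (KP F Y) (G F × Y)) := by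
  have k : ∀ (q : unitInterval × KP F Y), 0 < q.1.1 * q.2.1.1.1.2 + (1 - q.1.1) :=
    fun q => comb_pos q.1.2.1 q.1.2.2 q.2.2.2
  refine ⟨⟨⟨fun w => (⟨w.1.1.1.1, w.2.1⟩, w.1.2), ?_⟩,
    ⟨fun q => ⟨(⟨(q.1.1, 1), snd_ne one_ne_zero⟩, q.2), q.1.2, (one_pos : (0:ℝ) < 1)⟩, ?_⟩, ?_,
    ContinuousMap.Homotopic.refl _⟩⟩
  · exact (G_mk (by fun_prop) _).prodMk (by fun_prop)
  · exact Continuous.subtype_mk ((G_mk (by fun_prop) _).prodMk (by fun_prop)) _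
  · refine ⟨⟨⟨fun q => ⟨(⟨(q.2.1.1.1.1, q.1.1 * q.2.1.1.1.2 + (1 - q.1.1)),
      snd_ne (k q).ne'⟩, q.2.1.2), q.2.2.1, k q⟩, ?_⟩, ?_, ?_⟩⟩
    · refine Continuous.subtype_mk ?_ _
      refine Continuous.prodMk (G_mk ?_ _) (by fun_prop)
      fun_prop
    · intro w
      refine Subtype.ext (Prod.ext (G_ext (Prod.ext rfl ?_)) rfl)
      change (0 : ℝ) * _ + (1 - 0) = 1
      ring
    · intro w
      refine Subtype.ext (Prod.ext (G_ext (Prod.ext rfl ?_)) rfl)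
      change (1 : ℝ) * w.1.1.1.2 + (1 - 1) = w.1.1.1.2
      ring

lemma K_surj [Nontrivial F] (n : ℕ) :
    Function.Surjective (Hs (incl KP_KU : C(KP F Y, KU F Y)) n) := by
  obtain ⟨x0, hx0⟩ := exists_ne (0 : F)
  let s : C(KU F Y, KP F Y) := ⟨fun w => ⟨(⟨(x0, w.1.1.1.2), snd_ne w.2.ne'⟩, w.1.2), hx0, w.2⟩, by
    refine Continuous.subtype_mk ?_ _
    refine Continuous.prodMk (G_mk ?_ _) (by fun_prop)
    fun_prop⟩
  have h : ((incl KP_KU : C(KP F Y, KU F Y)).comp s).Homotopic (ContinuousMap.id _) := by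
    refine ⟨⟨⟨fun q => ⟨(⟨(q.1.1 • q.2.1.1.1.1 + (1 - q.1.1) • x0, q.2.1.1.1.2),
      snd_ne q.2.2.ne'⟩, q.2.1.2), q.2.2⟩, ?_⟩, ?_, ?_⟩⟩
    · refine Continuous.subtype_mk ?_ _
      refine Continuous.prodMk (G_mk ?_ _) (by fun_prop)
      fun_prop
    · intro w
      refine Subtype.ext (Prod.ext (G_ext (Prod.ext ?_ rfl)) rfl)
      change (0 : ℝ) • w.1.1.1.1 + (1 - 0 : ℝ) • x0 = x0
      simp
    · intro w
      refine Subtype.ext (Prod.ext (G_ext (Prod.ext ?_ rfl)) rfl)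
      change (1 : ℝ) • w.1.1.1.1 + (1 - 1 : ℝ) • x0 = w.1.1.1.1
      simp
  intro y
  refine ⟨Hs s n y, ?_⟩
  have := congr($(Hs_homotopic h n) y)
  rw [Hs_comp, Hs_id] at this
  exact this

variable [InvolutiveNeg Y] [ContinuousNeg Y]

instance : InvolutiveNeg (GP F Y) where
  neg w := ⟨-w.1, neg_ne_zero.2 w.2⟩
  neg_neg w := Subtype.ext (neg_neg w.1)

lemma GP_neg (w : GP F Y) : (-w).1 = -w.1 := rfl

instance : ContinuousNeg (GP F Y) where
  continuous_neg := Continuous.subtype_mk (continuous_neg.comp continuous_subtype_val) _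

lemma QGP_heq : Nonempty (ContinuousMap.HomotopyEquiv (Q (GP F Y)) (Q (G F × Y))) := by
  have key := q_hequiv (E := GP F Y) (E' := G F × Y)
  obtain ⟨e, -⟩ := key
    ⟨fun w => (⟨w.1.1.1.1, w.2⟩, w.1.2), (G_mk (by fun_prop) _).prodMk (by fun_prop)⟩
    ⟨fun q => ⟨(⟨(q.1.1, 0), fst_ne q.1.2⟩, q.2), q.1.2⟩,
      Continuous.subtype_mk ((G_mk (by fun_prop) _).prodMk (by fun_prop)) _⟩
    (fun w => rfl)
    (fun w => Subtype.ext (Prod.ext (G_ext (Prod.ext rfl neg_zero.symm)) rfl))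
    ⟨fun q => ⟨(⟨(q.2.1.1.1.1, q.1.1 * q.2.1.1.1.2), fst_ne q.2.2⟩, q.2.1.2), q.2.2⟩, by
      refine Continuous.subtype_mk ?_ _
      refine Continuous.prodMk (G_mk ?_ _) (by fun_prop)
      fun_prop⟩
    (fun t w => Subtype.ext (Prod.ext (G_ext (Prod.ext rfl (mul_neg t.1 w.1.1.1.2))) rfl))
    (fun w => Subtype.ext (Prod.ext (G_ext (Prod.ext rfl (zero_mul w.1.1.1.2))) rfl))
    (fun w => Subtype.ext (Prod.ext (G_ext (Prod.ext rfl (one_mul w.1.1.1.2))) rfl))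
    ⟨fun q => q.2, continuous_snd⟩ (fun _ _ => rfl) (fun _ => rfl) (fun _ => rfl)
  exact ⟨e⟩

/-- inclusion of the upper half in the quotient -/
def Ki : C(KU F Y, Q (G (F × ℝ) × Y)) := qm.comp (sval _)

/-- inclusion of the other part in the quotient -/
def Kj : C(Q (GP F Y), Q (G (F × ℝ) × Y)) := qmap (sval _) (fun _ => rfl)

lemma Ki_emb : Topology.IsOpenEmbedding (Ki : C(KU F Y, _)) := by
  refine Topology.IsOpenEmbedding.of_continuous_injective_isOpenMap Ki.continuous ?_ ?_
  · rintro ⟨u, hu⟩ ⟨v, hv⟩ h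
    have h : qm u = qm v := h
    rcases qm_eq.1 h with h | h
    · exact Subtype.ext h.symm
    · exfalso
      have h2 : v.1.1.2 = -u.1.1.2 := by rw [h]; rfl
      have hu : 0 < u.1.1.2 := hu
      have hv : 0 < v.1.1.2 := hv
      linarith
  · exact qm_open.isOpenMap.comp KU_open.isOpenEmbedding_subtypeVal.isOpenMap

lemma Kj_emb : Topology.IsOpenEmbedding (Kj : C(Q (GP F Y), _)) := by
  refine Topology.IsOpenEmbedding.of_continuous_injective_isOpenMap Kj.continuous ?_ ?_
  · intro u v h
    obtain ⟨u, rfl⟩ := qm_surj u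
    obtain ⟨v, rfl⟩ := qm_surj v
    have h : qm u.1 = qm v.1 := h
    rw [qm_eq] at h ⊢
    exact h.imp (fun h => Subtype.ext h) (fun h => Subtype.ext h)
  · intro O hO
    have : (Kj : C(Q (GP F Y), _)) '' O = qm '' (Subtype.val '' ((qm : C(GP F Y, _)) ⁻¹' O)) := by
      ext z
      constructor
      · rintro ⟨u, hu, rfl⟩
        obtain ⟨u, rfl⟩ := qm_surj u
        exact ⟨u.1, ⟨u, hu, rfl⟩, rfl⟩
      · rintro ⟨_, ⟨u, hu, rfl⟩, rfl⟩
        exact ⟨qm u, hu, rfl⟩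
    rw [this]
    exact qm_open.isOpenMap _ (GP_open.isOpenEmbedding_subtypeVal.isOpenMap _
      (hO.preimage qm.continuous))

lemma K_cov (w : Q (G (F × ℝ) × Y)) :
    w ∈ Set.range (Ki : C(KU F Y, _)) ∨ w ∈ Set.range (Kj : C(Q (GP F Y), _)) := by
  obtain ⟨w, rfl⟩ := qm_surj w
  by_cases hx : w.1.1.1 = 0
  · left
    have ht : w.1.1.2 ≠ 0 := fun ht => w.1.2 (Prod.ext hx ht)
    rcases lt_or_gt_of_ne ht with ht | ht
    · refine ⟨⟨-w, ?_⟩, qm_neg w⟩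
      change 0 < - w.1.1.2
      linarith
    · exact ⟨⟨w, ht⟩, rfl⟩
  · exact Or.inr ⟨qm ⟨w, hx⟩, rfl⟩

lemma K_MV : MV (Cm (incl KP_KU : C(KP F Y, KU F Y)))
    (Cm (qm.comp (incl KP_GP) : C(KP F Y, Q (GP F Y)))) (Cm Ki) (Cm Kj) := by
  apply MV_top
  · rfl
  · exact Topology.IsEmbedding.inclusion KP_KU
  · exact Ki_emb
  · exact Kj_emb
  · exact K_cov
  · intro u v h
    obtain ⟨v, rfl⟩ := qm_surj v
    have h : qm u.1 = qm v.1 := h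
    refine ⟨⟨u.1, ?_, u.2⟩, rfl⟩
    intro hu
    rcases qm_eq.1 h with h | h
    · refine v.2 ?_
      rw [h]; exact hu
    · refine v.2 ?_
      rw [h]
      change -u.1.1.1.1 = 0
      rw [hu, neg_zero]

lemma K_step [Nontrivial F] (fF : FinH (G F × Y)) (fQ : FinH (Q (G F × Y))) :
    FinH (Q (G (F × ℝ) × Y)) ∧ bt (Q (G (F × ℝ) × Y)) 0 ≤ bt (Q (G F × Y)) 0 ∧
      ∀ n, bt (Q (G (F × ℝ) × Y)) (n+1) + bt Y n ≤ bt (Q (G F × Y)) (n+1) + bt (G F × Y) n := by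
  obtain ⟨e1⟩ := KU_heq (F := F) (Y := Y)
  obtain ⟨e2⟩ := KP_heq (F := F) (Y := Y)
  obtain ⟨e3⟩ := QGP_heq (F := F) (Y := Y)
  have h1 := mv_fin (K_MV (F := F) (Y := Y)) rfl K_surj (fF.of_eq e2) (fQ.of_eq e3)
  have h2 := mv_le (K_MV (F := F) (Y := Y)) rfl K_surj (fF.of_eq e2) (fQ.of_eq e3)
  simp only [bt_eq e1, bt_eq e2, bt_eq e3] at h2
  exact ⟨h1, h2⟩

lemma K_base [Subsingleton F] :
    Nonempty (ContinuousMap.HomotopyEquiv (Q (G (F × ℝ) × Y)) Y) := by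
  obtain ⟨e1⟩ := KU_heq (F := F) (Y := Y)
  have hs : Function.Surjective (Ki : C(KU F Y, _)) := by
    intro w
    rcases K_cov w with h | ⟨v, hv⟩
    · exact h
    · obtain ⟨v, rfl⟩ := qm_surj v
      exact absurd (Subsingleton.elim _ _) v.2
  have e : KU F Y ≃ₜ Q (G (F × ℝ) × Y) := Ki_emb.toIsEmbedding.toHomeomorphOfSurjective hs
  exact ⟨e.symm.toHomotopyEquiv.trans e1⟩

end qgeom
end SklProof


namespace SklProof
open Simplicial Opposite

/-! ## Recursion over the dimension -/
section rec
set_option linter.unusedSectionVars false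

variable {F F' : Type} [NormedAddCommGroup F] [NormedSpace ℝ F]
variable [NormedAddCommGroup F'] [NormedSpace ℝ F']
variable {Y : Type} [TopologicalSpace Y]

/-- Euclidean space -/
abbrev V (k : ℕ) : Type := EuclideanSpace ℝ (Fin k)

/-- a linear equivalence induces a map of punctured spaces -/
def Gmap (e : F ≃L[ℝ] F') : C(G F, G F') :=
  ⟨fun x => ⟨e x.1, (map_ne_zero_iff e e.injective).2 x.2⟩, G_mk (e.continuous.comp G_cont) _⟩

lemma Gmap_neg (e : F ≃L[ℝ] F') (x : G F) : Gmap e (-x) = -Gmap e x := G_ext (map_neg e x.1)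

lemma Gmap_symm (e : F ≃L[ℝ] F') (x : G F) : Gmap e.symm (Gmap e x) = x :=
  G_ext (e.symm_apply_apply x.1)

lemma Gmap_symm' (e : F ≃L[ℝ] F') (x : G F') : Gmap e (Gmap e.symm x) = x :=
  G_ext (e.apply_symm_apply x.1)

/-- homeomorphism of punctured spaces -/
def Ghom (e : F ≃L[ℝ] F') : G F ≃ₜ G F' where
  toFun := Gmap e
  invFun := Gmap e.symm
  left_inv := Gmap_symm e
  right_inv := Gmap_symm' e
  continuous_toFun := (Gmap e).continuous
  continuous_invFun := (Gmap e.symm).continuous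

/-- homotopy equivalence of products -/
def GYhe (e : F ≃L[ℝ] F') : ContinuousMap.HomotopyEquiv (G F × Y) (G F' × Y) :=
  ((Ghom e).prodCongr (Homeomorph.refl Y)).toHomotopyEquiv

lemma QGYhe [InvolutiveNeg Y] [ContinuousNeg Y] (e : F ≃L[ℝ] F') :
    Nonempty (ContinuousMap.HomotopyEquiv (Q (G F × Y)) (Q (G F' × Y))) := by
  have key := q_hequiv (E := G F × Y) (E' := G F' × Y)
  obtain ⟨e, -⟩ := key
    ⟨fun w => (Gmap e w.1, w.2), ((Gmap e).continuous.comp continuous_fst).prodMk continuous_snd⟩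
    ⟨fun w => (Gmap e.symm w.1, w.2),
      ((Gmap e.symm).continuous.comp continuous_fst).prodMk continuous_snd⟩
    (fun w => Prod.ext (Gmap_neg e w.1) rfl)
    (fun w => Prod.ext (Gmap_neg e.symm w.1) rfl)
    ⟨fun q => q.2, continuous_snd⟩ (fun _ _ => rfl)
    (fun w => Prod.ext (Gmap_symm e w.1).symm rfl) (fun _ => rfl)
    ⟨fun q => q.2, continuous_snd⟩ (fun _ _ => rfl)
    (fun w => Prod.ext (Gmap_symm' e w.1).symm rfl) (fun _ => rfl)
  exact ⟨e⟩

/-- splitting off a coordinate -/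
noncomputable def Vsplit (k : ℕ) : V (k+1) ≃L[ℝ] V k × ℝ :=
  ContinuousLinearEquiv.ofFinrankEq (by simp)

lemma h_rec (fY : FinH Y) (k : ℕ) : FinH (G (V (k+1)) × Y) ∧
    ∀ i, bt (G (V (k+1)) × Y) i = bt Y i + (if k ≤ i then bt Y (i-k) else 0) := by
  induction k with
  | zero =>
    obtain ⟨h1, h2⟩ := G_base (F := V 0) fY
    refine ⟨h1.of_eq (GYhe (Vsplit 0)), fun i => ?_⟩
    rw [bt_eq (GYhe (Vsplit 0)), h2]
    simp [two_mul]
  | succ k ih =>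
    obtain ⟨h1, h2⟩ := ih
    obtain ⟨g1, g2, g3⟩ := G_step (F := V (k+1)) fY h1
    refine ⟨g1.of_eq (GYhe (Vsplit (k+1))), fun i => ?_⟩
    rw [bt_eq (GYhe (Vsplit (k+1)))]
    cases i with
    | zero => rw [g2]; simp
    | succ n =>
      have := g3 n
      rw [h2 n] at this
      have e : n + 1 - (k + 1) = n - k := by omega
      rw [e]
      split_ifs at * <;> omega

lemma q_rec [InvolutiveNeg Y] [ContinuousNeg Y] (fY : FinH Y) (k : ℕ) :
    FinH (Q (G (V (k+1)) × Y)) ∧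
    ∀ i, bt (Q (G (V (k+1)) × Y)) i ≤
      ∑ j ∈ Finset.range (k+1), (if j ≤ i then bt Y (i-j) else 0) := by
  induction k with
  | zero =>
    obtain ⟨e⟩ := K_base (F := V 0) (Y := Y)
    obtain ⟨e'⟩ := QGYhe (Y := Y) (Vsplit 0)
    refine ⟨fY.of_eq (e'.trans e), fun i => ?_⟩
    rw [bt_eq (e'.trans e)]
    simp
  | succ k ih =>
    obtain ⟨h1, h2⟩ := ih
    obtain ⟨f1, f2⟩ := h_rec fY k
    obtain ⟨e'⟩ := QGYhe (Y := Y) (Vsplit (k+1))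
    obtain ⟨g1, g2, g3⟩ := K_step (F := V (k+1)) f1 h1
    refine ⟨g1.of_eq e', fun i => ?_⟩
    rw [bt_eq e', Finset.sum_range_succ]
    cases i with
    | zero =>
      have := h2 0
      omega
    | succ n =>
      have := g3 n
      rw [f2 n] at this
      have h3 := h2 (n+1)
      have e : n + 1 - (k + 1) = n - k := by omega
      rw [e]
      split_ifs at * <;> omega

lemma sph_rec (l : ℕ) : FinH (G (V (l+1))) ∧
    ∀ i, bt (G (V (l+1))) i = (if i = 0 then 1 else 0) + (if i = l then 1 else 0) := by
  obtain ⟨h1, h2⟩ := h_rec (Y := Unit) pt_fin l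
  have e : ContinuousMap.HomotopyEquiv (G (V (l+1))) (G (V (l+1)) × Unit) :=
    (Homeomorph.prodPUnit _).symm.toHomotopyEquiv
  refine ⟨h1.of_eq e, fun i => ?_⟩
  rw [bt_eq e, h2, pt_bt, pt_bt]
  split_ifs <;> omega

lemma sum_aux (k l i : ℕ) :
    ∑ j ∈ Finset.range (k+1),
      (if j ≤ i then ((if i - j = 0 then 1 else 0) + (if i - j = l then 1 else 0)) else 0) =
    (if i ≤ k then 1 else 0) + (if l ≤ i ∧ i ≤ k + l then 1 else 0) := by
  induction k with
  | zero => simp; split_ifs <;> omega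
  | succ k ih =>
    rw [Finset.sum_range_succ, ih]
    split_ifs <;> omega

lemma num_aux (k l : ℕ) (hkl : k ≤ l) (b r : ℕ → ℕ) (r0 : r 0 = 0)
    (h : ∀ i, ((if i = 0 then 1 else 0) + (if i = l then 1 else 0) +
      (if k ≤ i then (if i - k = 0 then 1 else 0) + (if i - k = l then 1 else 0) else 0))
        + r i + r (i+1) = 2 * b i ∧ r i ≤ b i ∧ r (i+1) ≤ b i)
    (hb : ∀ i, b i ≤ (if i ≤ k then 1 else 0) + (if l ≤ i ∧ i ≤ k + l then 1 else 0)) (i : ℕ) :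
    b i = (if i ≤ k then 1 else 0) + (if l ≤ i ∧ i ≤ k + l then 1 else 0) := by
  have key : ∀ i, r i = (if 1 ≤ i ∧ i ≤ k then 1 else 0) + (if l + 1 ≤ i ∧ i ≤ k + l then 1 else 0) ∧
      b i = (if i ≤ k then 1 else 0) + (if l ≤ i ∧ i ≤ k + l then 1 else 0) := by
    have step : ∀ i, r i = (if 1 ≤ i ∧ i ≤ k then 1 else 0) +
        (if l + 1 ≤ i ∧ i ≤ k + l then 1 else 0) →
      r (i+1) = (if 1 ≤ i+1 ∧ i+1 ≤ k then 1 else 0) +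
        (if l + 1 ≤ i+1 ∧ i+1 ≤ k + l then 1 else 0) ∧
      b i = (if i ≤ k then 1 else 0) + (if l ≤ i ∧ i ≤ k + l then 1 else 0) := by
      intro i hr
      obtain ⟨h1, h2, h3⟩ := h i
      have h4 := hb i
      have h5 := hb (i+1)
      have h6 := (h (i+1)).2.1
      generalize r (i+1) = R at *
      generalize b (i+1) = B' at *
      generalize b i = B at *
      generalize r i = R' at *
      clear h hb r0
      grind (splits := 40)
    have all : ∀ i, r i = (if 1 ≤ i ∧ i ≤ k then 1 else 0) +
        (if l + 1 ≤ i ∧ i ≤ k + l then 1 else 0) := by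
      intro i
      induction i with
      | zero => simp [r0]
      | succ i ih => exact (step i ih).1
    exact fun i => ⟨all i, (step i (all i)).2⟩
  exact (key i).2

lemma GG_bt (k l : ℕ) (hkl : k ≤ l) (i : ℕ) :
    bt (Q (G (V (k+1)) × G (V (l+1)))) i =
      (if i ≤ k then 1 else 0) + (if l ≤ i ∧ i ≤ k + l then 1 else 0) := by
  obtain ⟨s1, s2⟩ := sph_rec l
  obtain ⟨h1, h2⟩ := h_rec s1 k
  obtain ⟨q1, q2⟩ := q_rec s1 k
  have key := gysin_num (E := G (V (k+1)) × G (V (l+1)))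
  obtain ⟨r, r0, hr⟩ := key (fun e h => G_free e.1 (congrArg Prod.fst h)) h1 q1
  simp only [s2] at h2 q2
  refine num_aux k l hkl (fun i => bt (Q (G (V (k+1)) × G (V (l+1)))) i) r r0 ?_ ?_ i
  · intro i
    have := hr i
    rw [h2] at this
    exact this
  · intro i
    refine (q2 i).trans (le_of_eq ?_)
    exact sum_aux k l i

/-! ## Comparison with the spheres -/

/-- sphere -/
abbrev Sph (k : ℕ) : Type := Metric.sphere (0 : V (k+1)) 1

lemma Sph_ne {k : ℕ} (x : Sph k) : x.1 ≠ 0 := by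
  intro h
  have := x.2
  rw [mem_sphere_zero_iff_norm, h, norm_zero] at this
  exact zero_ne_one this

/-- inclusion -/
def Si (k : ℕ) : C(Sph k, G (V (k+1))) :=
  ⟨fun x => ⟨x.1, Sph_ne x⟩, G_mk continuous_subtype_val _⟩

lemma Gnorm {k : ℕ} (x : G (V (k+1))) : ‖x.1‖ ≠ 0 := norm_ne_zero_iff.2 x.2

lemma inv_cont {k : ℕ} : Continuous (fun x : G (V (k+1)) => ‖x.1‖⁻¹) :=
  Continuous.inv₀ (by fun_prop) (fun x => Gnorm x)

/-- normalization -/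
noncomputable def Sn (k : ℕ) : C(G (V (k+1)), Sph k) :=
  ⟨fun x => ⟨‖x.1‖⁻¹ • x.1, by
    rw [mem_sphere_zero_iff_norm, norm_smul, norm_inv, norm_norm, inv_mul_cancel₀ (Gnorm x)]⟩,
    Continuous.subtype_mk (inv_cont.smul G_cont) _⟩

lemma Sn_neg {k : ℕ} (x : G (V (k+1))) : Sn k (-x) = -Sn k x := by
  refine Subtype.ext ?_
  change ‖-x.1‖⁻¹ • (-x.1) = -(‖x.1‖⁻¹ • x.1)
  rw [norm_neg, smul_neg]

lemma Sn_Si {k : ℕ} (x : Sph k) : Sn k (Si k x) = x := by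
  refine Subtype.ext ?_
  change ‖x.1‖⁻¹ • x.1 = x.1
  have := x.2
  rw [mem_sphere_zero_iff_norm] at this
  rw [this]; simp

lemma pos_aux {k : ℕ} (q : unitInterval × G (V (k+1))) : 0 < q.1.1 * 1 + (1 - q.1.1) * ‖q.2.1‖⁻¹ := by
  have h1 : 0 < ‖q.2.1‖⁻¹ := inv_pos.2 (norm_pos_iff.2 q.2.2)
  have h2 := q.1.2.1
  have h3 := q.1.2.2
  rcases eq_or_lt_of_le h2 with h | h
  · rw [← h]; simpa using q.2.2
  · have := mul_nonneg (sub_nonneg.2 h3) h1.le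
    linarith

/-- radial homotopy -/
noncomputable def Sh (k : ℕ) : C(unitInterval × G (V (k+1)), G (V (k+1))) :=
  ⟨fun q => ⟨(q.1.1 * 1 + (1 - q.1.1) * ‖q.2.1‖⁻¹) • q.2.1, smul_ne_zero (pos_aux q).ne' q.2.2⟩, by
    refine G_mk ?_ _
    have h : Continuous (fun q : unitInterval × G (V (k+1)) => ‖q.2.1‖⁻¹) :=
      inv_cont.comp continuous_snd
    fun_prop⟩

lemma Sh_neg {k : ℕ} (t) (x : G (V (k+1))) : Sh k (t, -x) = -Sh k (t, x) := by
  refine G_ext ?_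
  change (t.1 * 1 + (1 - t.1) * ‖-x.1‖⁻¹) • (-x.1) = -((t.1 * 1 + (1 - t.1) * ‖x.1‖⁻¹) • x.1)
  rw [norm_neg, smul_neg]

lemma Sh_zero {k : ℕ} (x : G (V (k+1))) : Sh k (0, x) = Si k (Sn k x) := by
  refine G_ext ?_
  change ((0:ℝ) * 1 + (1 - 0) * ‖x.1‖⁻¹) • x.1 = ‖x.1‖⁻¹ • x.1
  simp

lemma Sh_one {k : ℕ} (x : G (V (k+1))) : Sh k (1, x) = x := by
  refine G_ext ?_
  change ((1:ℝ) * 1 + (1 - 1) * ‖x.1‖⁻¹) • x.1 = x.1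
  simp

lemma SS_heq (k l : ℕ) : Nonempty (ContinuousMap.HomotopyEquiv (Q (Sph k × Sph l))
    (Q (G (V (k+1)) × G (V (l+1))))) := by
  have key := q_hequiv (E := Sph k × Sph l) (E' := G (V (k+1)) × G (V (l+1)))
  obtain ⟨e, -⟩ := key ((Si k).prodMap (Si l)) ((Sn k).prodMap (Sn l))
    (fun w => rfl)
    (fun w => Prod.ext (Sn_neg w.1) (Sn_neg w.2))
    ⟨fun q => q.2, continuous_snd⟩ (fun _ _ => rfl)
    (fun w => Prod.ext (Sn_Si w.1).symm (Sn_Si w.2).symm) (fun _ => rfl)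
    ⟨fun q => (Sh k (q.1, q.2.1), Sh l (q.1, q.2.2)), by fun_prop⟩
    (fun t w => Prod.ext (Sh_neg t w.1) (Sh_neg t w.2))
    (fun w => Prod.ext (Sh_zero w.1) (Sh_zero w.2))
    (fun w => Prod.ext (Sh_one w.1) (Sh_one w.2))
  exact ⟨e⟩

lemma bt_setoid {E : Type} [TopologicalSpace E] (s t : Setoid E) (h : ∀ a b, s a b ↔ t a b) (i : ℕ) :
    bt (Quotient s) i = bt (Quotient t) i := by
  obtain rfl : s = t := Setoid.ext h
  rfl

lemma betti_Skl (k l : ℕ) (hkl : k ≤ l) (i : ℕ) :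
    betti (Skl k l) i = (if i ≤ k then 1 else 0) + (if l ≤ i ∧ i ≤ k + l then 1 else 0) := by
  obtain ⟨e⟩ := SS_heq k l
  rw [← GG_bt k l hkl i, ← bt_eq e]
  refine bt_setoid (E := Sph k × Sph l) _ (Qs (Sph k × Sph l)) ?_ i
  intro a b
  constructor
  · rintro (⟨h1, h2⟩ | ⟨h1, h2⟩)
    · exact Or.inl (Prod.ext (Subtype.ext h1.symm) (Subtype.ext h2.symm))
    · refine Or.inr (Prod.ext (Subtype.ext ?_) (Subtype.ext ?_))
      · exact (neg_eq_iff_eq_neg.2 h1).symm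
      · exact (neg_eq_iff_eq_neg.2 h2).symm
  · rintro (h | h)
    · subst h; exact Or.inl ⟨rfl, rfl⟩
    · subst h
      exact Or.inr ⟨(neg_neg a.1.1).symm, (neg_neg a.2.1).symm⟩

lemma sum_u (k l : ℕ) : ∑ i ∈ Finset.range (k + l + 1),
    ((if i ≤ k then 1 else 0) + (if l ≤ i ∧ i ≤ k + l then 1 else 0)) = 2 * (k + 1) := by
  rw [Finset.sum_add_distrib, ← Finset.sum_filter, ← Finset.sum_filter]
  have h1 : (Finset.range (k+l+1)).filter (fun i => i ≤ k) = Finset.range (k+1) := by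
    ext i
    rw [Finset.mem_filter, Finset.mem_range, Finset.mem_range]
    omega
  have h2 : (Finset.range (k+l+1)).filter (fun i => l ≤ i ∧ i ≤ k + l) = Finset.Ico l (k+l+1) := by
    ext i
    rw [Finset.mem_filter, Finset.mem_range, Finset.mem_Ico]
    omega
  rw [h1, h2]
  simp
  omega

end rec
end SklProof

theorem sum_betti_Skl (n k : ℕ) (hk : k ≤ n - k) (hkn : k ≤ n) :
    ∑' i : ℕ, (betti (Skl k (n - k)) i : ℕ∞) = (2 * (k + 1) : ℕ∞) := by
  generalize n - k = l at hk
  rw [tsum_eq_sum (s := Finset.range (k + l + 1))]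
  · rw [← Nat.cast_sum]
    simp only [SklProof.betti_Skl k l hk]
    rw [SklProof.sum_u]
    push_cast
    rfl
  · intro i hi
    rw [Finset.mem_range] at hi
    rw [SklProof.betti_Skl k l hk, if_neg (by omega), if_neg (by omega)]
    rfl
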